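/- arXiv:2303.03345 — 6 statements merged into one kernel-verified Lean document; each statement's English description precedes it below -/
import Mathlib

section
/- With notation as in the auxiliary polynomial construction, for every positive integer d every coefficient of the polynomial h(r_d + d·x) ∈ ℤ[x] is divisible by λ(d); equivalently, h_d(x) = h(r_d + d·x)/λ(d) is a polynomial with integer coefficients. -/
theorem aux_prime_dvd (lam : ℕ → ℕ) (hlam1 : lam 1 = 1)
    (hlamMul : ∀ a b : ℕ, lam (a * b) = lam a * lam b)
    (m : ℕ → ℕ) (hlamP : ∀ p : ℕ, p.Prime → lam p = p ^ m p) (q : ℕ) (hq : q.Prime) :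
    ∀ a : ℕ, 0 < a → q ∣ lam a → q ∣ a := by
  intro a
  induction a using induction_on_primes with
  | zero => intro h0; omega
  | one => intro _ h1; rwa [hlam1] at h1
  | prime_mul p a hp ih =>
    intro h0 h1
    rw [hlamMul, hlamP p hp] at h1
    rcases hq.dvd_mul.1 h1 with h2 | h2
    · exact (hq.dvd_of_dvd_pow h2).mul_right a
    · exact (ih (Nat.pos_of_mul_pos_left h0) h2).mul_left p

theorem aux_dvd (lam : ℕ → ℕ) (hlam1 : lam 1 = 1)
    (hlamMul : ∀ a b : ℕ, lam (a * b) = lam a * lam b)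
    (m : ℕ → ℕ) (hlamP : ∀ p : ℕ, p.Prime → lam p = p ^ m p) (N : ℕ) (d : ℕ) (hd : 0 < d)
    (H : ∀ p α : ℕ, p.Prime → p ^ α ∣ d → (p ^ α) ^ m p ∣ N) :
    lam d ∣ N := by
  induction d using Nat.recOnPosPrimePosCoprime with
  | zero => omega
  | one => rw [hlam1]; exact one_dvd _
  | prime_pow p n hp hn =>
    have : ∀ n, lam (p ^ n) = (p ^ n) ^ m p := by
      intro n
      induction n with
      | zero => simp [hlam1]
      | succ n ih => rw [pow_succ, hlamMul, ih, hlamP p hp, mul_pow]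
    rw [this]
    exact H p n hp dvd_rfl
  | coprime a b ha hb hab iha ihb =>
    rw [hlamMul]
    refine Nat.Coprime.mul_dvd_of_dvd_of_dvd ?_
      (iha (by omega) fun p α hp h1 => H p α hp (h1.mul_right b))
      (ihb (by omega) fun p α hp h1 => H p α hp (h1.mul_left a))
    refine Nat.Coprime.symm ?_
    refine Nat.Coprime.symm (Nat.coprime_of_dvd ?_)
    intro q hq h1 h2
    have h3 := aux_prime_dvd lam hlam1 hlamMul m hlamP q hq a (by omega) h1
    have h4 := aux_prime_dvd lam hlam1 hlamMul m hlamP q hq b (by omega) h2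
    exact Nat.not_coprime_of_dvd_of_dvd hq.one_lt h3 h4 hab

theorem aux_coeff (h : Polynomial ℤ) (p : ℕ) [Fact p.Prime] (z : ℤ_[p]) (r : ℤ) (d α : ℕ)
    (hd : p ^ α ∣ d) (hr : (p : ℤ_[p]) ^ α ∣ (z - (r : ℤ_[p]))) (i : ℕ) :
    (((p ^ α) ^ Polynomial.rootMultiplicity z (h.map (algebraMap ℤ ℤ_[p])) : ℕ) : ℤ) ∣
      (h.comp (Polynomial.C r + Polynomial.C (d : ℤ) * Polynomial.X)).coeff i := by
  set m := Polynomial.rootMultiplicity z (h.map (algebraMap ℤ ℤ_[p])) with hm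
  have key : Polynomial.C ((p : ℤ_[p]) ^ (α * m)) ∣
      (h.comp (Polynomial.C r + Polynomial.C (d : ℤ) * Polynomial.X)).map
        (algebraMap ℤ ℤ_[p]) := by
    rw [Polynomial.map_comp]
    obtain ⟨q, hq⟩ := Polynomial.pow_rootMultiplicity_dvd (h.map (algebraMap ℤ ℤ_[p])) z
    rw [hq, Polynomial.mul_comp, Polynomial.pow_comp, pow_mul, Polynomial.C_pow]
    refine Dvd.dvd.mul_right (pow_dvd_pow_of_dvd ?_ _) _
    obtain ⟨u, hu⟩ := hr
    obtain ⟨v, rfl⟩ := hd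
    refine ⟨Polynomial.C (v : ℤ_[p]) * Polynomial.X - Polynomial.C u, ?_⟩
    have hz : z = r + (p : ℤ_[p]) ^ α * u := by rw [← hu]; ring
    rw [hz]
    simp
    ring
  have h2 := (Polynomial.C_dvd_iff_dvd_coeff _ _).1 key i
  rw [Polynomial.coeff_map] at h2
  rw [← pow_mul]
  have h3 := (PadicInt.norm_le_pow_iff_mem_span_pow _ _).2 (Ideal.mem_span_singleton.2 h2)
  have h4 := (PadicInt.norm_int_le_pow_iff_dvd (p := p)).1 h3
  exact_mod_cast h4


/-- The auxiliary polynomials have integer coefficients: `λ(d)` divides every coefficient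
of `h(r_d + d·x)`, i.e. `h_d(x) = h(r_d + d·x)/λ(d) ∈ ℤ[x]`. -/
theorem stmt2
    (k : ℕ) (hk : 0 < k)
    (h : Polynomial ℤ) (hdeg : h.natDegree = k) (hlead : 0 < h.leadingCoeff)
    (hint : ∀ q : ℕ, 0 < q → ∃ n : ℤ, (q : ℤ) ∣ h.eval n)
    (z : ∀ (p : ℕ) [Fact p.Prime], ℤ_[p])
    (hz : ∀ (p : ℕ) [Fact p.Prime], Polynomial.aeval (z p) h = 0)
    (lam : ℕ → ℕ) (hlam1 : lam 1 = 1)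
    (hlamMul : ∀ a b : ℕ, lam (a * b) = lam a * lam b)
    (hlamP : ∀ (p : ℕ) [Fact p.Prime],
      lam p = p ^ Polynomial.rootMultiplicity (z p) (h.map (algebraMap ℤ ℤ_[p])))
    (r : ℕ → ℤ)
    (hr : ∀ d : ℕ, 0 < d → -(d : ℤ) < r d ∧ r d ≤ 0)
    (hrz : ∀ d : ℕ, 0 < d → ∀ (p : ℕ) [Fact p.Prime], ∀ α : ℕ, p ^ α ∣ d →
      (p : ℤ_[p]) ^ α ∣ (z p - (r d : ℤ_[p])))
    :
    ∀ d : ℕ, 0 < d →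
      (∀ i : ℕ, (lam d : ℤ) ∣
        (h.comp (Polynomial.C (r d) + Polynomial.C (d : ℤ) * Polynomial.X)).coeff i) ∧
      ∃ H : Polynomial ℤ, Polynomial.C (lam d : ℤ) * H =
        h.comp (Polynomial.C (r d) + Polynomial.C (d : ℤ) * Polynomial.X) := by
  intro d hd
  have hc : ∀ i : ℕ, (lam d : ℤ) ∣
        (h.comp (Polynomial.C (r d) + Polynomial.C (d : ℤ) * Polynomial.X)).coeff i := by
    intro i
    rw [Int.natCast_dvd]
    classical
    let m : ℕ → ℕ := fun p => if hp : p.Prime then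
      haveI : Fact p.Prime := ⟨hp⟩
      Polynomial.rootMultiplicity (z p) (h.map (algebraMap ℤ ℤ_[p])) else 0
    refine aux_dvd lam hlam1 hlamMul m ?_ _ d hd ?_
    · intro p hp
      haveI : Fact p.Prime := ⟨hp⟩
      simp only [m, dif_pos hp]
      exact hlamP p
    · intro p α hp hpd
      haveI : Fact p.Prime := ⟨hp⟩
      simp only [m, dif_pos hp]
      rw [← Int.natCast_dvd]
      exact aux_coeff h p (z p) (r d) d α hpd (hrz d hd p α hpd) i
  refine ⟨hc, ?_⟩
  obtain ⟨H, hH⟩ := (Polynomial.C_dvd_iff_dvd_coeff _ _).2 hc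
  exact ⟨H, hH.symm⟩
end

section
/- For all positive integers d and q one has λ(q)·h_{dq}(ℕ) ⊆ h_d(ℕ); that is, for every positive integer n there exists a positive integer n' with λ(q)·h_{dq}(n) = h_d(n'). -/
/-- Proposition 3.2: `λ(q)·h_{dq}(ℕ) ⊆ h_d(ℕ)` for all positive integers `d, q`. -/
theorem stmt3
    (k : ℕ) (hk : 0 < k)
    (h : Polynomial ℤ) (hdeg : h.natDegree = k) (hlead : 0 < h.leadingCoeff)
    (hint : ∀ q : ℕ, 0 < q → ∃ n : ℤ, (q : ℤ) ∣ h.eval n)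
    (z : ∀ (p : ℕ) [Fact p.Prime], ℤ_[p])
    (hz : ∀ (p : ℕ) [Fact p.Prime], Polynomial.aeval (z p) h = 0)
    (lam : ℕ → ℕ) (hlam1 : lam 1 = 1)
    (hlamMul : ∀ a b : ℕ, lam (a * b) = lam a * lam b)
    (hlamP : ∀ (p : ℕ) [Fact p.Prime],
      lam p = p ^ Polynomial.rootMultiplicity (z p) (h.map (algebraMap ℤ ℤ_[p])))
    (r : ℕ → ℤ)
    (hr : ∀ d : ℕ, 0 < d → -(d : ℤ) < r d ∧ r d ≤ 0)
    (hrz : ∀ d : ℕ, 0 < d → ∀ (p : ℕ) [Fact p.Prime], ∀ α : ℕ, p ^ α ∣ d →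
      (p : ℤ_[p]) ^ α ∣ (z p - (r d : ℤ_[p])))
    (H : ℕ → Polynomial ℤ)
    (hH : ∀ d : ℕ, 0 < d →
      Polynomial.C (lam d : ℤ) * H d =
        h.comp (Polynomial.C (r d) + Polynomial.C (d : ℤ) * Polynomial.X))
    :
    ∀ d q : ℕ, 0 < d → 0 < q → ∀ n : ℕ, 0 < n →
      ∃ nn : ℕ, 0 < nn ∧
        (lam q : ℤ) * (H (d * q)).eval (n : ℤ) = (H d).eval (nn : ℤ) := by
  intro d q hd hq n hn
  have hlampos : ∀ m : ℕ, 0 < m → lam m ≠ 0 := by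
    intro m
    induction m using Nat.recOnMul with
    | zero => intro h0; exact absurd h0 (lt_irrefl _)
    | one => intro _; rw [hlam1]; exact one_ne_zero
    | prime p hp =>
      intro _
      haveI : Fact p.Prime := ⟨hp⟩
      rw [hlamP p]
      exact pow_ne_zero _ hp.ne_zero
    | mul a b iha ihb =>
      intro hab
      rw [hlamMul]
      exact mul_ne_zero (iha (Nat.pos_of_mul_pos_right hab)) (ihb (Nat.pos_of_mul_pos_left hab))
  have hdq : 0 < d * q := Nat.mul_pos hd hq
  have hdvd : (d : ℤ) ∣ r (d * q) - r d := by
    rw [Int.natCast_dvd, Nat.dvd_iff_prime_pow_dvd_dvd]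
    intro p α hp hpd
    haveI : Fact p.Prime := ⟨hp⟩
    rw [← Int.natCast_dvd, Nat.cast_pow, ← PadicInt.pow_p_dvd_int_iff]
    have h1 := hrz d hd p α hpd
    have h2 := hrz (d * q) hdq p α (hpd.mul_right q)
    have h3 := dvd_sub h1 h2
    rw [sub_sub_sub_cancel_left] at h3
    exact_mod_cast h3
  obtain ⟨t, ht⟩ := hdvd
  have hpos : 0 < t + q * n := by
    have h1 := (hr (d * q) hdq).1
    have h2 := (hr d hd).2
    have hd' : (0 : ℤ) < d := by exact_mod_cast hd
    have hn' : (1 : ℤ) ≤ n := by exact_mod_cast hn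
    have hdq' : (0 : ℤ) < d * q := by exact_mod_cast hdq
    push_cast at h1
    have : 0 < (d : ℤ) * (t + q * n) := by nlinarith
    exact pos_of_mul_pos_right this hd'.le
  refine ⟨(t + q * n).toNat, by omega, ?_⟩
  rw [Int.toNat_of_nonneg hpos.le]
  have e1 := congrArg (Polynomial.eval (n : ℤ)) (hH (d * q) hdq)
  have e2 := congrArg (Polynomial.eval (t + q * n : ℤ)) (hH d hd)
  simp only [Polynomial.eval_mul, Polynomial.eval_C, Polynomial.eval_comp, Polynomial.eval_add,
    Polynomial.eval_X] at e1 e2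
  have hl : (lam d : ℤ) ≠ 0 := by exact_mod_cast hlampos d hd
  apply mul_left_cancel₀ hl
  rw [e2, ← mul_assoc, ← Nat.cast_mul, ← hlamMul, e1]
  congr 1
  push_cast
  linear_combination ht
end

section
/- There is a constant C = C(h) > 0 such that for every positive integer d, the sum J_d of the absolute values of the coefficients of the auxiliary polynomial h_d satisfies J_d ≤ C·b_d, where b_d denotes the leading coefficient of h_d. -/
/-- Proposition 3.3: the sum `J_d` of the absolute values of the coefficients of `h_d`
satisfies `J_d ≤ C·b_d` where `b_d` is the leading coefficient of `h_d`. -/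
theorem stmt4
    (k : ℕ) (hk : 0 < k)
    (h : Polynomial ℤ) (hdeg : h.natDegree = k) (hlead : 0 < h.leadingCoeff)
    (hint : ∀ q : ℕ, 0 < q → ∃ n : ℤ, (q : ℤ) ∣ h.eval n)
    (z : ∀ (p : ℕ) [Fact p.Prime], ℤ_[p])
    (hz : ∀ (p : ℕ) [Fact p.Prime], Polynomial.aeval (z p) h = 0)
    (lam : ℕ → ℕ) (hlam1 : lam 1 = 1)
    (hlamMul : ∀ a b : ℕ, lam (a * b) = lam a * lam b)
    (hlamP : ∀ (p : ℕ) [Fact p.Prime],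
      lam p = p ^ Polynomial.rootMultiplicity (z p) (h.map (algebraMap ℤ ℤ_[p])))
    (r : ℕ → ℤ)
    (hr : ∀ d : ℕ, 0 < d → -(d : ℤ) < r d ∧ r d ≤ 0)
    (hrz : ∀ d : ℕ, 0 < d → ∀ (p : ℕ) [Fact p.Prime], ∀ α : ℕ, p ^ α ∣ d →
      (p : ℤ_[p]) ^ α ∣ (z p - (r d : ℤ_[p])))
    (H : ℕ → Polynomial ℤ)
    (hH : ∀ d : ℕ, 0 < d →
      Polynomial.C (lam d : ℤ) * H d =
        h.comp (Polynomial.C (r d) + Polynomial.C (d : ℤ) * Polynomial.X))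
    :
    ∃ C : ℝ, 0 < C ∧ ∀ d : ℕ, 0 < d →
      (∑ i ∈ Finset.range ((H d).natDegree + 1), |((H d).coeff i : ℝ)|) ≤
        C * ((H d).leadingCoeff : ℝ) := by
  classical
  set M : ℤ := ∑ i ∈ Finset.range (k + 1), ∑ n ∈ Finset.range (k - i + 1),
    |(Polynomial.hasseDeriv i h).coeff n| with hM
  have hM0 : 0 ≤ M := Finset.sum_nonneg fun i _ => Finset.sum_nonneg fun n _ => abs_nonneg _
  refine ⟨(M : ℝ) + 1, by exact_mod_cast (by omega : (0 : ℤ) < M + 1), ?_⟩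
  intro d hd
  have hd' : (0 : ℤ) < d := by exact_mod_cast hd
  set P := h.comp (Polynomial.C (r d) + Polynomial.C (d : ℤ) * Polynomial.X) with hP
  have hPd : Polynomial.C (lam d : ℤ) * H d = P := hH d hd
  have hP2 : P = (Polynomial.taylor (r d) h).comp (Polynomial.C (d : ℤ) * Polynomial.X) := by
    rw [hP, Polynomial.taylor_apply, Polynomial.comp_assoc]
    simp [add_comm]
  have hPc : ∀ i, P.coeff i = (Polynomial.hasseDeriv i h).eval (r d) * (d : ℤ) ^ i := by
    intro i
    rw [hP2, Polynomial.comp_C_mul_X_coeff, Polynomial.taylor_coeff]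
  have hlin : (Polynomial.C (r d) + Polynomial.C (d : ℤ) * Polynomial.X).natDegree = 1 := by
    rw [add_comm]; exact Polynomial.natDegree_linear hd'.ne'
  have hlinl : (Polynomial.C (r d) + Polynomial.C (d : ℤ) * Polynomial.X).leadingCoeff = (d : ℤ) := by
    rw [add_comm]; exact Polynomial.leadingCoeff_linear hd'.ne'
  have hPn : P.natDegree = k := by
    rw [hP, Polynomial.natDegree_comp, hlin, hdeg, mul_one]
  have hPl : P.leadingCoeff = h.leadingCoeff * (d : ℤ) ^ k := by
    rw [hP, Polynomial.leadingCoeff_comp (by rw [hlin]; norm_num), hlinl, hdeg]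
  have hl0 : lam d ≠ 0 := by
    intro h0
    rw [h0] at hPd
    have : P = 0 := by rw [← hPd]; simp
    rw [this] at hPl
    have : 0 < h.leadingCoeff * (d : ℤ) ^ k := by positivity
    rw [← hPl] at this
    simp at this
  have hlpos : (0 : ℤ) < lam d := by exact_mod_cast Nat.pos_of_ne_zero hl0
  have hHn : (H d).natDegree = k := by
    rw [← hPn, ← hPd, Polynomial.natDegree_C_mul hlpos.ne']
  have hHl : (lam d : ℤ) * (H d).leadingCoeff = h.leadingCoeff * (d : ℤ) ^ k := by
    rw [← hPl, ← hPd, Polynomial.leadingCoeff_mul, Polynomial.leadingCoeff_C]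
  have hHc : ∀ i, (lam d : ℤ) * (H d).coeff i = P.coeff i := by
    intro i
    rw [← hPd, Polynomial.coeff_C_mul]
  have hrabs : |r d| ≤ d := by
    rw [abs_le]; have := hr d hd; constructor <;> linarith
  have hbound : ∀ i ∈ Finset.range (k + 1), |P.coeff i| ≤
      (∑ n ∈ Finset.range (k - i + 1), |(Polynomial.hasseDeriv i h).coeff n|) * (d : ℤ) ^ k := by
    intro i hi
    have hik : i ≤ k := by simpa [Nat.lt_succ_iff] using hi
    have hnd : (Polynomial.hasseDeriv i h).natDegree < k - i + 1 := by
      have := Polynomial.natDegree_hasseDeriv_le h i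
      omega
    rw [hPc, Polynomial.eval_eq_sum_range' hnd, Finset.sum_mul, Finset.sum_mul]
    refine (Finset.abs_sum_le_sum_abs _ _).trans (Finset.sum_le_sum ?_)
    intro n hn
    have hn' : n + i ≤ k := by
      have := Finset.mem_range.1 hn
      omega
    rw [abs_mul, abs_mul, mul_assoc]
    refine mul_le_mul_of_nonneg_left ?_ (abs_nonneg _)
    rw [abs_pow, abs_pow, abs_of_pos hd']
    calc |r d| ^ n * (d : ℤ) ^ i ≤ (d : ℤ) ^ n * (d : ℤ) ^ i := by gcongr
      _ = (d : ℤ) ^ (n + i) := (pow_add _ _ _).symm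
      _ ≤ (d : ℤ) ^ k := pow_le_pow_right₀ (by omega) hn'
  have hfin : (∑ i ∈ Finset.range (k + 1), |(H d).coeff i|) ≤ (M + 1) * (H d).leadingCoeff := by
    refine le_of_mul_le_mul_left ?_ hlpos
    calc (lam d : ℤ) * ∑ i ∈ Finset.range (k + 1), |(H d).coeff i|
        = ∑ i ∈ Finset.range (k + 1), |P.coeff i| := by
          rw [Finset.mul_sum]
          refine Finset.sum_congr rfl fun i _ => ?_
          rw [← hHc, abs_mul, abs_of_pos hlpos]
      _ ≤ M * (d : ℤ) ^ k := by
          rw [hM, Finset.sum_mul]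
          exact Finset.sum_le_sum hbound
      _ ≤ (M + 1) * (h.leadingCoeff * (d : ℤ) ^ k) := by
          have h1 : (d : ℤ) ^ k ≤ h.leadingCoeff * (d : ℤ) ^ k :=
            le_mul_of_one_le_left (by positivity) (by omega)
          have h2 : (0 : ℤ) ≤ (d : ℤ) ^ k := by positivity
          exact mul_le_mul (by omega) h1 h2 (by omega)
      _ = (lam d : ℤ) * ((M + 1) * (H d).leadingCoeff) := by
          rw [← hHl]; ring
  rw [hHn]
  exact_mod_cast hfin
end

section
/- There is a constant C = C(h) > 0 such that cont(h_d) ≤ C for every positive integer d, where cont(h_d) denotes the gcd of the nonconstant coefficients of the auxiliary polynomial h_d. -/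
open Polynomial in
theorem aux_clear (P : Polynomial ℚ) : ∃ (b : ℤ) (f : Polynomial ℤ), b ≠ 0 ∧
    f.map (Int.castRingHom ℚ) = C (b : ℚ) * P := by
  obtain ⟨b, hb, h⟩ := IsLocalization.integerNormalization_spec (nonZeroDivisors ℤ) P
  refine ⟨b, IsLocalization.integerNormalization (nonZeroDivisors ℤ) P, nonZeroDivisors.ne_zero hb, ?_⟩
  rw [← eq_intCast (algebraMap ℤ ℚ) b, ← Polynomial.smul_eq_C_mul, algebraMap_smul]
  exact h

open Polynomial in
theorem aux_A (h : Polynomial ℤ) (h0 : h ≠ 0) : ∃ (f U V Q : Polynomial ℤ) (D s : ℤ) (n : ℕ),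
    D ≠ 0 ∧ s ≠ 0 ∧ U * f + V * derivative f = C D ∧ h * Q = C s * f ^ n := by
  have inj : Function.Injective (Polynomial.map (Int.castRingHom ℚ)) :=
    Polynomial.map_injective _ (RingHom.injective_int _)
  set hQ := h.map (Int.castRingHom ℚ) with hhQ
  have hQ0 : hQ ≠ 0 := by
    intro h1
    exact h0 (inj (by rw [← hhQ, h1, Polynomial.map_zero]))
  obtain ⟨n, q, hq⟩ := UniqueFactorizationMonoid.exists_dvd_radical_self_pow hQ0
  have hsep : (UniqueFactorizationMonoid.radical hQ).Separable :=
    PerfectField.separable_iff_squarefree.2 UniqueFactorizationMonoid.squarefree_radical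
  set F := UniqueFactorizationMonoid.radical hQ
  obtain ⟨u, v, huv⟩ := hsep
  obtain ⟨b, f, hb, hf⟩ := aux_clear F
  obtain ⟨c, U, hc, hU⟩ := aux_clear u
  obtain ⟨e, V, he, hV⟩ := aux_clear v
  obtain ⟨s, Q, hs, hQQ⟩ := aux_clear q
  refine ⟨f, C e * U, C c * V, C (b ^ n) * Q, c * e * b, s, n, ?_, hs, ?_, ?_⟩
  · exact mul_ne_zero (mul_ne_zero hc he) hb
  · apply inj
    simp only [Polynomial.map_add, Polynomial.map_mul, ← Polynomial.derivative_map, hf, hU, hV,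
      Polynomial.map_C, Int.coe_castRingHom, derivative_mul, derivative_C, Int.cast_mul, C_mul]
    linear_combination (C (c : ℚ) * C (e : ℚ) * C (b : ℚ)) * huv
  · apply inj
    simp only [Polynomial.map_mul, Polynomial.map_pow, hf, hQQ,
      Polynomial.map_C, Int.coe_castRingHom, Int.cast_pow, C_pow, ← hhQ, mul_pow]
    linear_combination (- C (s : ℚ) * C (b : ℚ) ^ n) * hq

open Polynomial in
theorem aux_cmp {R : Type*} [CommRing R] [IsDomain R] (z : R) (A B : Polynomial R) (a b : ℕ)
    (h : (X - C z) ^ a * A = (X - C z) ^ b * B) (hA : A.eval z ≠ 0) (hB : B.eval z ≠ 0) :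
    A = B := by
  have hX : (X - C z : Polynomial R) ≠ 0 := X_sub_C_ne_zero z
  wlog hab : a ≤ b generalizing a b A B
  · exact (this B A b a h.symm hB hA (by omega)).symm
  obtain ⟨c, rfl⟩ := Nat.exists_eq_add_of_le hab
  rw [pow_add, mul_assoc] at h
  have h2 := mul_left_cancel₀ (pow_ne_zero a hX) h
  rcases Nat.eq_zero_or_pos c with rfl | hc
  · simpa using h2
  · exfalso
    apply hA
    rw [h2]
    simp [hc.ne']

open Polynomial in
theorem aux_B {R : Type*} [CommRing R] [IsDomain R] (z : R) (h f U V Q g : Polynomial R)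
    (D s : R) (n m : ℕ) (hD : D ≠ 0) (hs : s ≠ 0)
    (h1 : U * f + V * derivative f = C D) (h2 : h * Q = C s * f ^ n)
    (hz : h.eval z = 0) (hg : h = (X - C z) ^ m * g) (hgz : g.eval z ≠ 0) :
    g.eval z ∣ s * D ^ n := by
  have hfz : f.eval z = 0 := by
    have := congrArg (eval z) h2
    simp only [eval_mul, hz, zero_mul, eval_C, eval_pow] at this
    exact eq_zero_of_pow_eq_zero ((mul_eq_zero.1 this.symm).resolve_left hs)
  obtain ⟨f1, rfl⟩ := dvd_iff_isRoot.2 hfz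
  have hVD : V.eval z * f1.eval z = D := by
    have := congrArg (eval z) h1
    simpa [derivative_mul] using this
  have hf1 : f1.eval z ≠ 0 := by
    rintro h; rw [h, mul_zero] at hVD; exact hD hVD.symm
  have hQ0 : Q ≠ 0 := by
    rintro rfl
    have : C s * ((X - C z) * f1) ^ n ≠ 0 := by
      apply mul_ne_zero (by simpa using hs)
      apply pow_ne_zero
      apply mul_ne_zero (X_sub_C_ne_zero z)
      rintro rfl; simp at hf1
    exact this (by rw [← h2, mul_zero])
  obtain ⟨q, hq, hqn⟩ := exists_eq_pow_rootMultiplicity_mul_and_not_dvd Q hQ0 z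
  have hqz : q.eval z ≠ 0 := fun h => hqn (dvd_iff_isRoot.2 h)
  have key : g * q = C s * f1 ^ n := by
    apply aux_cmp z _ _ (m + Q.rootMultiplicity z) n
    · rw [hg, mul_pow] at h2
      linear_combination h2 - ((X - C z) ^ m * g) * hq
    · simpa using ⟨hgz, hqz⟩
    · simpa using ⟨hs, fun h => absurd h hf1⟩
  have k2 := congrArg (eval z) key
  simp only [eval_mul, eval_C, eval_pow] at k2
  refine ⟨q.eval z * V.eval z ^ n, ?_⟩
  rw [← hVD, mul_pow]
  linear_combination (- V.eval z ^ n) * k2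

open Polynomial in
theorem aux_split {R : Type*} [CommRing R] (P : Polynomial R) (c : R)
    (hc : ∀ i, 1 ≤ i → c ∣ P.coeff i) : ∃ (t : R) (K : Polynomial R), P = C t + C c * K := by
  have : C c ∣ P - C (P.coeff 0) := by
    rw [C_dvd_iff_dvd_coeff]
    intro i
    rcases Nat.eq_zero_or_pos i with rfl | hi
    · simp
    · simpa [coeff_C, hi.ne'] using hc i hi
  obtain ⟨K, hK⟩ := this
  exact ⟨P.coeff 0, K, by rw [← hK]; ring⟩

open Polynomial in
theorem aux_C {R : Type*} [CommRing R] [IsDomain R] (z r w pa d' e l c : R) (m : ℕ) (hm : 0 < m)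
    (g h P : Polynomial R) (hpa : pa ≠ 0) (he : d' * e = 1)
    (hg : h = (X - C z) ^ m * g) (hw : z - r = pa * w)
    (hP : C (pa ^ m * l) * P = h.comp (C r + C (pa * d') * X))
    (hc : ∀ i, 1 ≤ i → c ∣ P.coeff i) : c ∣ g.eval z := by
  obtain ⟨t, K, rfl⟩ := aux_split P c hc
  have h1 := congrArg (fun P => P.comp (C e * (X + C w))) hP
  have hr : (C r + C (pa * d') * X).comp (C e * (X + C w)) = C z + C pa * X := by
    have e1 : C d' * C e = (1 : Polynomial R) := by rw [← C_mul, he, C_1]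
    have e2 : C z - C r = C pa * C w := by rw [← C_mul, ← C_sub, hw]
    simp only [add_comp, mul_comp, C_comp, X_comp, C_mul]
    linear_combination (C pa * (X + C w)) * e1 - e2
  simp only [comp_assoc, hr] at h1
  rw [hg] at h1
  simp only [mul_comp, pow_comp, sub_comp, add_comp, X_comp, C_comp, add_sub_cancel_left,
    mul_pow, C_mul, C_pow, mul_assoc] at h1
  have h2 := mul_left_cancel₀ (pow_ne_zero m (by simpa using hpa)) h1
  have h3 := congrArg (fun P => P.coeff m) h2
  simp only [coeff_X_pow_mul', le_refl, if_true, Nat.sub_self, coeff_C_mul, coeff_add,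
    coeff_C, hm.ne', if_false, zero_add] at h3
  rw [coeff_zero_eq_eval_zero, eval_comp] at h3
  simp only [eval_add, eval_C, eval_mul, eval_X, mul_zero, add_zero] at h3
  rw [← h3]
  exact Dvd.dvd.mul_left (dvd_mul_right _ _) _



/-- The content `cont(h_d)` (gcd of the nonconstant coefficients of `h_d`) is bounded
uniformly in `d`. -/
theorem stmt5
    (k : ℕ) (hk : 0 < k)
    (h : Polynomial ℤ) (hdeg : h.natDegree = k) (hlead : 0 < h.leadingCoeff)
    (hint : ∀ q : ℕ, 0 < q → ∃ n : ℤ, (q : ℤ) ∣ h.eval n)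
    (z : ∀ (p : ℕ) [Fact p.Prime], ℤ_[p])
    (hz : ∀ (p : ℕ) [Fact p.Prime], Polynomial.aeval (z p) h = 0)
    (lam : ℕ → ℕ) (hlam1 : lam 1 = 1)
    (hlamMul : ∀ a b : ℕ, lam (a * b) = lam a * lam b)
    (hlamP : ∀ (p : ℕ) [Fact p.Prime],
      lam p = p ^ Polynomial.rootMultiplicity (z p) (h.map (algebraMap ℤ ℤ_[p])))
    (r : ℕ → ℤ)
    (hr : ∀ d : ℕ, 0 < d → -(d : ℤ) < r d ∧ r d ≤ 0)
    (hrz : ∀ d : ℕ, 0 < d → ∀ (p : ℕ) [Fact p.Prime], ∀ α : ℕ, p ^ α ∣ d →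
      (p : ℤ_[p]) ^ α ∣ (z p - (r d : ℤ_[p])))
    (H : ℕ → Polynomial ℤ)
    (hH : ∀ d : ℕ, 0 < d →
      Polynomial.C (lam d : ℤ) * H d =
        h.comp (Polynomial.C (r d) + Polynomial.C (d : ℤ) * Polynomial.X))
    :
    ∃ C : ℕ, 0 < C ∧ ∀ d : ℕ, 0 < d →
      (Finset.Icc 1 (H d).natDegree).gcd (fun i => ((H d).coeff i).natAbs) ≤ C := by
  have h0 : h ≠ 0 := by rintro rfl; simp at hlead
  obtain ⟨f, U, V, Q, D, s, n, hD, hs, h1, h2⟩ := aux_A h h0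
  have hN : s * D ^ n ≠ 0 := mul_ne_zero hs (pow_ne_zero _ hD)
  refine ⟨(s * D ^ n).natAbs, Int.natAbs_pos.2 hN, fun d hd => ?_⟩
  apply Nat.le_of_dvd (Int.natAbs_pos.2 hN)
  rw [Nat.dvd_iff_prime_pow_dvd_dvd]
  intro p b hp hpb
  have : Fact p.Prime := ⟨hp⟩
  have hcoef : ∀ i, 1 ≤ i → ((p ^ b : ℕ) : ℤ) ∣ (H d).coeff i := by
    intro i hi
    by_cases hi2 : i ≤ (H d).natDegree
    · rw [Int.natCast_dvd]
      exact hpb.trans (Finset.gcd_dvd (Finset.mem_Icc.2 ⟨hi, hi2⟩))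
    · rw [Polynomial.coeff_eq_zero_of_natDegree_lt (by omega)]
      exact dvd_zero _
  rw [← Int.natCast_dvd, Nat.cast_pow, ← PadicInt.pow_p_dvd_int_iff]
  set φ : ℤ →+* ℤ_[p] := algebraMap ℤ ℤ_[p] with hφ
  have hφi : Function.Injective φ := RingHom.injective_int _
  have hm0 : h.map φ ≠ 0 := (Polynomial.map_ne_zero_iff hφi).2 h0
  have hroot : (h.map φ).eval (z p) = 0 := by
    rw [Polynomial.eval_map_algebraMap]; exact hz p
  obtain ⟨g, hg, hgn⟩ := Polynomial.exists_eq_pow_rootMultiplicity_mul_and_not_dvd _ hm0 (z p)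
  have hgz : g.eval (z p) ≠ 0 := fun h => hgn (Polynomial.dvd_iff_isRoot.2 h)
  have hmpos : 0 < (h.map φ).rootMultiplicity (z p) :=
    (Polynomial.rootMultiplicity_pos hm0).2 hroot
  have hl := hlamP p
  rw [← hφ] at hl
  set m := (h.map φ).rootMultiplicity (z p) with hmdef
  have hB : g.eval (z p) ∣ φ s * φ D ^ n := by
    apply aux_B (z p) (h.map φ) (f.map φ) (U.map φ) (V.map φ) (Q.map φ) g (φ D) (φ s) n m
      ((map_ne_zero_iff φ hφi).2 hD) ((map_ne_zero_iff φ hφi).2 hs) ?_ ?_ hroot hg hgz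
    · simpa [Polynomial.derivative_map] using congrArg (Polynomial.map φ) h1
    · simpa using congrArg (Polynomial.map φ) h2
  have hgoal : ((s * D ^ n : ℤ) : ℤ_[p]) = φ s * φ D ^ n := by simp [hφ]
  rw [hgoal]
  refine dvd_trans ?_ hB
  obtain ⟨a, d', hd', hda⟩ := Nat.exists_eq_pow_mul_and_not_dvd hd.ne' p hp.ne_one
  obtain ⟨w, hw⟩ := hrz d hd p a ⟨d', hda⟩
  have hunit : IsUnit ((d' : ℕ) : ℤ_[p]) := by
    rw [PadicInt.isUnit_iff]
    by_contra hne
    have hlt : ‖((d' : ℤ) : ℤ_[p])‖ < 1 := by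
      simpa using lt_of_le_of_ne (PadicInt.norm_le_one _) hne
    rw [PadicInt.norm_int_lt_one_iff_dvd] at hlt
    exact hd' (by exact_mod_cast hlt)
  obtain ⟨e, he⟩ := hunit.exists_right_inv
  have hlampow : ∀ a : ℕ, lam (p ^ a) = lam p ^ a := by
    intro a
    induction a with
    | zero => simpa using hlam1
    | succ a ih => rw [pow_succ, hlamMul, ih, pow_succ]
  have hlamd : lam d = (p ^ a) ^ m * lam d' := by
    rw [hda, hlamMul, hlampow, hl, ← pow_mul, ← pow_mul, mul_comm m a]
  have hp0 : (p : ℤ_[p]) ≠ 0 := by exact_mod_cast hp.ne_zero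
  apply aux_C (z p) ((r d : ℤ) : ℤ_[p]) w ((p : ℤ_[p]) ^ a) (d' : ℤ_[p]) e (lam d' : ℤ_[p])
    ((p : ℤ_[p]) ^ b) m hmpos g (h.map φ) ((H d).map φ) (pow_ne_zero _ hp0) he hg hw
  · have h3 := congrArg (Polynomial.map φ) (hH d hd)
    rw [Polynomial.map_comp, hlamd] at h3
    have hdc : (d : Polynomial ℤ_[p]) = (p : Polynomial ℤ_[p]) ^ a * d' := by rw [hda]; push_cast; rfl
    simpa [hφ, hdc] using h3
  · intro i hi
    obtain ⟨x, hx⟩ := hcoef i hi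
    refine ⟨φ x, ?_⟩
    rw [Polynomial.coeff_map, hx]
    simp [hφ]
end

section
/- There is a finite set S of integers ≥ 2, depending only on h (and the choice of the roots z_p), such that for every positive integer d and every integer q ≥ 2, if the derivative h_d' vanishes identically modulo q (i.e. q divides h_d'(n) for every integer n) then q ∈ S. -/
open Polynomial in
lemma aux_bezout (g : ℤ[X]) (f : ℚ[X]) : f ≠ 0 → ∃ N : ℤ, N ≠ 0 ∧
    ∀ (p : ℕ) [Fact p.Prime] (z : ℤ_[p]), aeval (z : ℚ_[p]) f = 0 → aeval z g ≠ 0 →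
      aeval z g ∣ (N : ℤ_[p]) := by
  induction f using UniqueFactorizationMonoid.induction_on_prime with
  | h₁ => intro h; exact absurd rfl h
  | h₂ x hx =>
    intro _
    refine ⟨1, one_ne_zero, fun p _ z h0 => ?_⟩
    have := hx.map (aeval (z : ℚ_[p]))
    rw [h0] at this
    exact absurd this not_isUnit_zero
  | h₃ a π ha hπ ih =>
    intro _
    obtain ⟨N, hN, ih⟩ := ih ha
    by_cases hd : π ∣ g.map (algebraMap ℤ ℚ)
    · refine ⟨N, hN, fun p _ z h0 hg => ?_⟩
      rw [map_mul, mul_eq_zero] at h0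
      rcases h0 with h0 | h0
      · exfalso
        obtain ⟨c, hc⟩ := hd
        apply hg
        have h1 : aeval (z : ℚ_[p]) (g.map (algebraMap ℤ ℚ)) = 0 := by
          rw [hc, map_mul, h0, zero_mul]
        rw [aeval_map_algebraMap] at h1
        have h2 := aeval_algebraMap_apply ℚ_[p] z g
        rw [PadicInt.algebraMap_apply, h1] at h2
        exact (map_eq_zero_iff _ (FaithfulSMul.algebraMap_injective ℤ_[p] ℚ_[p])).1 h2.symm
      · exact ih p z h0 hg
    · obtain ⟨u, v, huv⟩ := (hπ.irreducible.coprime_iff_not_dvd).2 hd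
      obtain ⟨b, hb, hv⟩ := IsLocalization.integerNormalization_spec (nonZeroDivisors ℤ) v
      set w := IsLocalization.integerNormalization (nonZeroDivisors ℤ) v
      have hb0 : b ≠ 0 := nonZeroDivisors.ne_zero hb
      refine ⟨b * N, mul_ne_zero hb0 hN, fun p _ z h0 hg => ?_⟩
      rw [map_mul, mul_eq_zero] at h0
      rcases h0 with h0 | h0
      · push_cast
        apply Dvd.dvd.mul_right
        refine ⟨aeval z w, ?_⟩
        have h1 := congrArg (aeval (z : ℚ_[p])) huv
        rw [map_add, map_mul, map_mul, h0, mul_zero, zero_add, map_one, aeval_map_algebraMap] at h1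
        have h3 := congrArg (aeval (z : ℚ_[p])) hv
        rw [aeval_map_algebraMap, map_zsmul] at h3
        have h2 := aeval_algebraMap_apply ℚ_[p] z g
        have h4 := aeval_algebraMap_apply ℚ_[p] z w
        rw [PadicInt.algebraMap_apply] at h2 h4
        apply FaithfulSMul.algebraMap_injective ℤ_[p] ℚ_[p]
        rw [map_mul, map_intCast, ← h2, ← h4, h3, zsmul_eq_mul]
        linear_combination -(b : ℚ_[p]) * h1
      · push_cast
        exact (ih p z h0 hg).mul_left _

open Polynomial in
lemma aux_vander (k : ℕ) : ∃ D : ℤ, D ≠ 0 ∧ ∀ (F : ℤ[X]) (q : ℤ), F.natDegree < k →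
    (∀ n : ℤ, q ∣ F.eval n) → ∀ i, q ∣ D * F.coeff i := by
  let v : Fin k → ℤ := fun i => ((i : ℕ) : ℤ)
  refine ⟨(Matrix.vandermonde v).det, ?_, ?_⟩
  · rw [Matrix.det_vandermonde_ne_zero_iff]
    intro a b hab
    exact Fin.ext (by simpa [v] using hab)
  · intro F q hF hq i
    by_cases hi : i < k
    · let c : Fin k → ℤ := fun j => F.coeff j
      have h1 : (Matrix.vandermonde v).mulVec c = fun j => F.eval (v j) := by
        funext j
        rw [eval_eq_sum_range' hF, Finset.sum_range]
        simp [Matrix.mulVec, dotProduct, Matrix.vandermonde_apply, c, mul_comm]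
      have h2 : (Matrix.vandermonde v).det • c
          = (Matrix.vandermonde v).adjugate.mulVec (fun j => F.eval (v j)) := by
        rw [← h1, Matrix.mulVec_mulVec, Matrix.adjugate_mul, Matrix.smul_mulVec,
          Matrix.one_mulVec]
      have h3 := congrFun h2 ⟨i, hi⟩
      simp only [Pi.smul_apply, smul_eq_mul, c] at h3
      rw [h3]
      simp only [Matrix.mulVec, dotProduct]
      exact Finset.dvd_sum fun j _ => (hq _).mul_left _
    · rw [coeff_eq_zero_of_natDegree_lt (by omega), mul_zero]
      exact dvd_zero _

open Polynomial in
lemma aux_hasse (h : ℤ[X]) (h0 : h ≠ 0) (p : ℕ) [Fact p.Prime] (z : ℤ_[p]) :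
    aeval z (hasseDeriv (rootMultiplicity z (h.map (algebraMap ℤ ℤ_[p]))) h) ≠ 0 := by
  have hm0 : h.map (algebraMap ℤ ℤ_[p]) ≠ 0 :=
    (Polynomial.map_ne_zero_iff (algebraMap ℤ ℤ_[p]).injective_int).2 h0
  set m := rootMultiplicity z (h.map (algebraMap ℤ ℤ_[p])) with hm
  intro hc
  have h1 := eval_iterate_derivative_rootMultiplicity (p := h.map (algebraMap ℤ ℤ_[p])) (t := z)
  rw [← hm, iterate_derivative_map, ← factorial_smul_hasseDeriv, eval_map_algebraMap,
    LinearMap.smul_apply, map_nsmul, hc, smul_zero] at h1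
  have h2 := eval_divByMonic_pow_rootMultiplicity_ne_zero (p := h.map (algebraMap ℤ ℤ_[p])) z hm0
  rw [← hm] at h2
  rw [nsmul_eq_mul] at h1
  rcases mul_eq_zero.1 h1.symm with h3 | h3
  · exact m.factorial_ne_zero (by exact_mod_cast h3)
  · exact h2 h3

open Polynomial in
lemma aux_coeff_s6 (h G : ℤ[X]) (l r d : ℤ) (e : C l * G = h.comp (C r + C d * X)) (i : ℕ) :
    l * G.coeff i = (hasseDeriv i h).eval r * d ^ i := by
  have : h.comp (C r + C d * X) = (taylor r h).comp (C d * X) := by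
    rw [taylor_apply, comp_assoc]; simp [add_comm]
  rw [this] at e
  have := congrArg (fun f => coeff f i) e
  simpa only [comp_C_mul_X_coeff, taylor_coeff, coeff_C_mul] using this

/-- The moduli `q ≥ 2` modulo which some derivative `h_d'` vanishes identically all lie in
a finite set depending only on `h` (and the chosen roots). -/
theorem stmt6
    (k : ℕ) (hk : 0 < k)
    (h : Polynomial ℤ) (hdeg : h.natDegree = k) (hlead : 0 < h.leadingCoeff)
    (hint : ∀ q : ℕ, 0 < q → ∃ n : ℤ, (q : ℤ) ∣ h.eval n)
    (z : ∀ (p : ℕ) [Fact p.Prime], ℤ_[p])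
    (hz : ∀ (p : ℕ) [Fact p.Prime], Polynomial.aeval (z p) h = 0)
    (lam : ℕ → ℕ) (hlam1 : lam 1 = 1)
    (hlamMul : ∀ a b : ℕ, lam (a * b) = lam a * lam b)
    (hlamP : ∀ (p : ℕ) [Fact p.Prime],
      lam p = p ^ Polynomial.rootMultiplicity (z p) (h.map (algebraMap ℤ ℤ_[p])))
    (r : ℕ → ℤ)
    (hr : ∀ d : ℕ, 0 < d → -(d : ℤ) < r d ∧ r d ≤ 0)
    (hrz : ∀ d : ℕ, 0 < d → ∀ (p : ℕ) [Fact p.Prime], ∀ α : ℕ, p ^ α ∣ d →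
      (p : ℤ_[p]) ^ α ∣ (z p - (r d : ℤ_[p])))
    (H : ℕ → Polynomial ℤ)
    (hH : ∀ d : ℕ, 0 < d →
      Polynomial.C (lam d : ℤ) * H d =
        h.comp (Polynomial.C (r d) + Polynomial.C (d : ℤ) * Polynomial.X))
    :
    ∃ S : Finset ℤ, (∀ s ∈ S, 2 ≤ s) ∧
      ∀ d : ℕ, 0 < d → ∀ q : ℤ, 2 ≤ q →
        (∀ n : ℤ, q ∣ (Polynomial.derivative (H d)).eval n) → q ∈ S := by
  classical
  have h0 : h ≠ 0 := by rintro rfl; simp at hlead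
  have hh0 : h.map (algebraMap ℤ ℚ) ≠ 0 :=
    (Polynomial.map_ne_zero_iff (algebraMap ℤ ℚ).injective_int).2 h0
  choose N hN0 hN using fun m : ℕ => aux_bezout (Polynomial.hasseDeriv m h) _ hh0
  obtain ⟨D, hD0, hD⟩ := aux_vander k
  let NN : ℤ := ∏ m ∈ Finset.range (k + 1), (m.succ : ℤ) * N m
  have hNN0 : NN ≠ 0 := Finset.prod_ne_zero_iff.2 fun m _ =>
    mul_ne_zero (by exact_mod_cast m.succ_ne_zero) (hN0 m)
  let W : ℤ := (k.factorial : ℤ)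
  have hW0 : W ≠ 0 := Nat.cast_ne_zero.2 k.factorial_ne_zero
  let M1 : ℤ := D * W * NN
  have hM10 : M1 ≠ 0 := mul_ne_zero (mul_ne_zero hD0 hW0) hNN0
  let M : ℤ := D * k * h.leadingCoeff * M1 ^ k * M1
  have hM0 : M ≠ 0 := by
    have : (k : ℤ) ≠ 0 := by exact_mod_cast hk.ne'
    exact mul_ne_zero (mul_ne_zero (mul_ne_zero (mul_ne_zero hD0 this) hlead.ne')
      (pow_ne_zero _ hM10)) hM10
  refine ⟨Finset.Icc 2 |M|, fun s hs => (Finset.mem_Icc.1 hs).1, fun d hd q hq hqd => ?_⟩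
  refine Finset.mem_Icc.2 ⟨hq, Int.le_of_dvd (abs_pos.2 hM0) ((dvd_abs _ _).2 ?_)⟩
  have hco := aux_coeff_s6 h (H d) _ _ _ (hH d hd)
  have hlamne : (lam d : ℤ) ≠ 0 := by
    intro hl
    have := hco k
    rw [hl, zero_mul] at this
    have h2 := hco k
    have h3 : (Polynomial.hasseDeriv k h).eval (r d) = h.leadingCoeff := by
      rw [← Polynomial.taylor_coeff, ← hdeg, Polynomial.coeff_taylor_natDegree]
    rw [h3] at this
    have hdz : (d : ℤ) ≠ 0 := by exact_mod_cast hd.ne'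
    exact mul_ne_zero hlead.ne' (pow_ne_zero k hdz) this.symm
  have hlc : (Polynomial.hasseDeriv k h).eval (r d) = h.leadingCoeff := by
    rw [← Polynomial.taylor_coeff, ← hdeg, Polynomial.coeff_taylor_natDegree]
  have hHdeg : (H d).natDegree ≤ k := by
    rw [Polynomial.natDegree_le_iff_coeff_eq_zero]
    intro i hi
    have := hco i
    rw [← Polynomial.taylor_coeff, Polynomial.coeff_eq_zero_of_natDegree_lt
      (p := Polynomial.taylor (r d) h), zero_mul]
      at this
    · exact (mul_eq_zero.1 this).resolve_left hlamne
    · rw [Polynomial.natDegree_taylor]; omega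
  have hq1 : ∀ i, 1 ≤ i → q ∣ D * (i * (H d).coeff i) := by
    intro i hi
    have := hD (Polynomial.derivative (H d)) q
      (lt_of_le_of_lt (Polynomial.natDegree_derivative_le _) (by omega)) hqd (i - 1)
    rw [Polynomial.coeff_derivative, Nat.sub_add_cancel hi] at this
    convert this using 2
    rw [mul_comm]; congr 1
    have : ((i - 1 : ℕ) : ℤ) = i - 1 := by omega
    rw [this]; ring
  -- pass to prime powers
  rw [← Int.natAbs_dvd_natAbs, Nat.dvd_iff_prime_pow_dvd_dvd]
  intro p v hp hpv
  haveI : Fact p.Prime := ⟨hp⟩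
  have hpv' : (p : ℤ) ^ v ∣ q := by
    rw [← Int.natAbs_dvd_natAbs, Int.natAbs_pow, Int.natAbs_natCast]; exact hpv
  suffices hs : (p : ℤ) ^ v ∣ M by
    rw [← Int.natAbs_dvd_natAbs, Int.natAbs_pow, Int.natAbs_natCast] at hs; exact hs
  obtain ⟨a, d', hpd', hdd⟩ := Nat.exists_eq_pow_mul_and_not_dvd hd.ne' p hp.one_lt.ne'
  have hcop : ∀ i w : ℕ, IsCoprime ((p : ℤ) ^ w) ((d' : ℤ) ^ i) := by
    intro i w
    apply IsCoprime.pow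
    rw [Nat.isCoprime_iff_coprime]
    exact (Nat.Prime.coprime_iff_not_dvd hp).2 hpd'
  have hdz : (d : ℤ) = (p : ℤ) ^ a * d' := by exact_mod_cast hdd
  set m := Polynomial.rootMultiplicity (z p) (h.map (algebraMap ℤ ℤ_[p])) with hm
  have hmap0 : h.map (algebraMap ℤ ℤ_[p]) ≠ 0 :=
    (Polynomial.map_ne_zero_iff (algebraMap ℤ ℤ_[p]).injective_int).2 h0
  have hm1 : 1 ≤ m := by
    rw [hm, Nat.one_le_iff_ne_zero, ← Nat.pos_iff_ne_zero, Polynomial.rootMultiplicity_pos hmap0,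
      Polynomial.IsRoot, Polynomial.eval_map_algebraMap]
    exact hz p
  have hmk : m ≤ k := by
    rw [hm, ← Polynomial.count_roots, ← hdeg]
    exact (Multiset.count_le_card _ _).trans ((Polynomial.card_roots' _).trans
      Polynomial.natDegree_map_le)
  have hlamd : (lam d : ℤ) = (p : ℤ) ^ (a * m) * lam d' := by
    have hpw : ∀ b : ℕ, lam (p ^ b) = p ^ (b * m) := by
      intro b
      induction b with
      | zero => simpa using hlam1
      | succ b ih => rw [pow_succ, hlamMul, ih, hlamP p, ← hm]; ring
    rw [hdd, hlamMul, hpw]; push_cast; ring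
  have hp0 : (p : ℤ) ≠ 0 := by exact_mod_cast hp.ne_zero
  have hcm : (lam d' : ℤ) * (H d).coeff m
      = (Polynomial.hasseDeriv m h).eval (r d) * (d' : ℤ) ^ m := by
    have := hco m
    rw [hlamd, hdz] at this
    apply mul_left_cancel₀ (pow_ne_zero (a * m) hp0)
    rw [← mul_assoc, this, mul_pow, ← pow_mul]; ring
  have hA : (p : ℤ) ^ v ∣ D * (m * (Polynomial.hasseDeriv m h).eval (r d)) := by
    apply (hcop m v).dvd_of_dvd_mul_right
    have := (hpv'.trans (hq1 m hm1)).mul_right (lam d' : ℤ)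
    convert this using 1
    linear_combination -(D * m) * hcm
  have hB : (p : ℤ) ^ (min v a) ∣ M1 := by
    have e1 : (p : ℤ_[p]) ^ (min v a) ∣ (D : ℤ_[p]) *
        (m * ((Polynomial.hasseDeriv m h).eval (r d) : ℤ)) := by
      have := (PadicInt.pow_p_dvd_int_iff (p := p) (min v a) _).2
        ((pow_dvd_pow (p : ℤ) (min_le_left v a)).trans hA)
      push_cast at this ⊢
      exact this
    have e2 : (p : ℤ_[p]) ^ (min v a) ∣ Polynomial.aeval (z p) (Polynomial.hasseDeriv m h)
        - ((Polynomial.hasseDeriv m h).eval (r d) : ℤ) := by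
      have s1 := hrz d hd p a (hdd ▸ dvd_mul_right _ _)
      have s2 := Polynomial.sub_dvd_eval_sub (z p) (r d : ℤ_[p])
        ((Polynomial.hasseDeriv m h).map (algebraMap ℤ ℤ_[p]))
      have s3 : ((Polynomial.hasseDeriv m h).map (algebraMap ℤ ℤ_[p])).eval (r d : ℤ_[p])
          = ((Polynomial.hasseDeriv m h).eval (r d) : ℤ) := by
        have := Polynomial.eval_map_apply (p := Polynomial.hasseDeriv m h)
          (f := algebraMap ℤ ℤ_[p]) (r d)
        simpa using this
      rw [s3, Polynomial.eval_map_algebraMap] at s2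
      exact ((pow_dvd_pow _ (min_le_right v a)).trans s1).trans s2
    have e3 : (p : ℤ_[p]) ^ (min v a) ∣ (D : ℤ_[p]) *
        (m * Polynomial.aeval (z p) (Polynomial.hasseDeriv m h)) := by
      have := dvd_add e1 (e2.mul_left ((D : ℤ_[p]) * m))
      convert this using 1
      ring
    have e4 := hN m p (z p) (by
      rw [Polynomial.aeval_map_algebraMap]
      have h2 := Polynomial.aeval_algebraMap_apply ℚ_[p] (z p) h
      rw [PadicInt.algebraMap_apply] at h2
      rw [h2, hz p]; simp) (aux_hasse h h0 p (z p))
    have e5 : (p : ℤ_[p]) ^ (min v a) ∣ ((D * (m * N m) : ℤ) : ℤ_[p]) := by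
      push_cast
      exact e3.trans (mul_dvd_mul_left _ (mul_dvd_mul_left _ e4))
    refine ((PadicInt.pow_p_dvd_int_iff _ _).1 e5).trans ?_
    have f1 : (m : ℤ) ∣ W := by
      exact Int.natCast_dvd_natCast.2 (Nat.dvd_factorial hm1 hmk)
    have f2 : N m ∣ NN :=
      (dvd_mul_left _ _).trans (Finset.dvd_prod_of_mem (fun m : ℕ => (m.succ : ℤ) * N m)
        (Finset.mem_range.2 (by omega)))
    change _ ∣ D * W * NN
    rw [mul_assoc]
    exact mul_dvd_mul_left _ (mul_dvd_mul f1 f2)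
  rcases le_total v a with hva | hva
  · rw [min_eq_left hva] at hB
    exact hB.mul_left _
  · rw [min_eq_right hva] at hB
    have g1 := (hpv'.trans (hq1 k hk)).mul_right (lam d : ℤ)
    have g2 := hco k
    rw [hlc] at g2
    have g3 : (p : ℤ) ^ v ∣ D * k * h.leadingCoeff * ((p : ℤ) ^ a) ^ k := by
      apply (hcop k v).dvd_of_dvd_mul_right
      convert g1 using 1
      rw [hdz] at g2
      linear_combination -(D * k) * g2
    exact (g3.trans (mul_dvd_mul_left _ (pow_dvd_pow_of_dvd hB k))).mul_right _
end

section
/- There is a constant c = c(h) > 0 such that for every positive integer d and every real Y ≥ 2 one has w_d(Y) ≥ c·(log Y)^{1−k}, where w_d(Y) = ∏_{p ≤ Y} (1 − j_d(p)/p^{γ_d(p)}), the product being over primes p ≤ Y. -/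
/-- `γ(g;p)`: the smallest positive integer `γ` such that the derivative `g'` does not vanish
identically modulo `p^γ`. -/
noncomputable def gammaExp (g : Polynomial ℤ) (p : ℕ) : ℕ :=
  sInf {c : ℕ | 0 < c ∧ ¬ ∀ n : ℤ, ((p : ℤ) ^ c) ∣ (Polynomial.derivative g).eval n}

/-- `j(g;p)`: the number of residues `s` modulo `p^{γ(g;p)}` with `g'(s) ≡ 0 (mod p^{γ(g;p)})`. -/
noncomputable def jCount (g : Polynomial ℤ) (p : ℕ) : ℕ := by
  classical
  exact ((Finset.range (p ^ gammaExp g p)).filter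
    (fun s => ((p : ℤ) ^ gammaExp g p) ∣ (Polynomial.derivative g).eval (s : ℤ))).card

/-- `∏_{p ≤ Y} (1 - j(g;p)/p^{γ(g;p)})`, the product being over primes `p ≤ Y`. -/
noncomputable def wProd (g : Polynomial ℤ) (Y : ℝ) : ℝ := by
  classical
  exact ∏ p ∈ (Finset.range (⌊Y⌋₊ + 1)).filter Nat.Prime,
    (1 - (jCount g p : ℝ) / (p : ℝ) ^ gammaExp g p)

/-- `W(g;Y) = {n ∈ ℤ : g'(n) ≢ 0 (mod p^{γ(g;p)}) for all primes p ≤ Y}`. -/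
def WSet (g : Polynomial ℤ) (Y : ℝ) : Set ℤ :=
  {n : ℤ | ∀ p : ℕ, p.Prime → (p : ℝ) ≤ Y →
    ¬ ((p : ℤ) ^ gammaExp g p ∣ (Polynomial.derivative g).eval n)}

/-- `W_q(g;Y) = {n ∈ ℤ : g'(n) ≢ 0 (mod p^{γ(g;p)}) for all primes p ≤ Y with p^{γ(g;p)} ∣ q}`. -/
def WqSet (g : Polynomial ℤ) (Y : ℝ) (q : ℕ) : Set ℤ :=
  {n : ℤ | ∀ p : ℕ, p.Prime → (p : ℝ) ≤ Y → p ^ gammaExp g p ∣ q →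
    ¬ ((p : ℤ) ^ gammaExp g p ∣ (Polynomial.derivative g).eval n)}

section analytic
open Finset

lemma mert_A (n : ℕ) (hn : 1 ≤ n) :
    ∑ p ∈ (range (n + 1)).filter Nat.Prime, Real.log p / p ≤ Real.log n + Real.log 4 := by
  have hn0 : (0:ℝ) < n := by exact_mod_cast hn
  have hth := Chebyshev.theta_le_log4_mul_x (x := (n:ℝ)) hn0.le
  rw [Chebyshev.theta_eq_sum_Icc, Nat.floor_natCast] at hth
  have hset : Finset.Icc 0 n = range (n+1) := by ext; simp
  rw [hset] at hth
  have hdvd : ∏ p ∈ (range (n + 1)).filter Nat.Prime, p ^ (n / p) ∣ n.factorial := by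
    apply Finset.prod_dvd_of_isRelPrime
    · intro p hp q hq hpq
      have hp' : p.Prime := (Finset.mem_filter.mp hp).2
      have hq' : q.Prime := (Finset.mem_filter.mp hq).2
      exact Nat.coprime_iff_isRelPrime.mp (Nat.Coprime.pow _ _ ((Nat.coprime_primes hp' hq').mpr hpq))
    · intro p hp
      have hp' : p.Prime := (Finset.mem_filter.mp hp).2
      have h1 : p ^ (n / p) ∣ (p * (n / p)).factorial := by
        rw [hp'.pow_dvd_iff_le_factorization (Nat.factorial_ne_zero _), Nat.factorization_factorial_mul hp']
        omega
      exact h1.trans (Nat.factorial_dvd_factorial (Nat.mul_div_le n p))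
  have hle := Nat.le_of_dvd (Nat.factorial_pos n) hdvd
  have hle2 := hle.trans (Nat.factorial_le_pow n)
  have hlog : ∑ p ∈ (range (n + 1)).filter Nat.Prime, ((n / p : ℕ) : ℝ) * Real.log p ≤ n * Real.log n := by
    have h1 : Real.log ((∏ p ∈ (range (n + 1)).filter Nat.Prime, p ^ (n / p) : ℕ) : ℝ) ≤ Real.log ((n ^ n : ℕ) : ℝ) := by
      apply Real.log_le_log
      · have : 0 < ∏ p ∈ (range (n + 1)).filter Nat.Prime, p ^ (n / p) :=
          Finset.prod_pos (fun p hp => pow_pos (Nat.Prime.pos (Finset.mem_filter.mp hp).2) _)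
        exact_mod_cast this
      · exact_mod_cast hle2
    push_cast at h1
    rw [Real.log_prod, Real.log_pow] at h1
    · simpa [Real.log_pow] using h1
    · intro p hp
      have := (Finset.mem_filter.mp hp).2.pos
      positivity
  have hterm : ∑ p ∈ (range (n + 1)).filter Nat.Prime, (n * (Real.log p / p) - Real.log p) ≤
      ∑ p ∈ (range (n + 1)).filter Nat.Prime, ((n / p : ℕ) : ℝ) * Real.log p := by
    apply Finset.sum_le_sum
    intro p hp
    have hp' := (Finset.mem_filter.mp hp).2
    have hpp : (0:ℝ) < p := by exact_mod_cast hp'.pos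
    have hl : 0 ≤ Real.log p := Real.log_natCast_nonneg p
    have : (n:ℝ) / p - 1 ≤ ((n / p : ℕ) : ℝ) := by
      have := Nat.lt_floor_add_one ((n:ℝ)/p)
      rw [Nat.floor_div_eq_div] at this
      linarith
    calc _ = ((n:ℝ)/p - 1) * Real.log p := by ring
      _ ≤ _ := by gcongr
  rw [Finset.sum_sub_distrib, ← Finset.mul_sum] at hterm
  have : (n:ℝ) * (∑ p ∈ (range (n + 1)).filter Nat.Prime, Real.log p / p) ≤ n * (Real.log n + Real.log 4) := by
    linarith
  exact le_of_mul_le_mul_left this hn0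

lemma mert (n : ℕ) (hn : 2 ≤ n) :
    ∑ p ∈ (range (n + 1)).filter Nat.Prime, (1:ℝ) / p ≤
      (∑ p ∈ (range (n + 1)).filter Nat.Prime, Real.log p / p) / Real.log n +
      Real.log (Real.log n) - Real.log 4 / Real.log n +
      (Real.log 4 / Real.log 2 - Real.log (Real.log 2)) := by
  induction n, hn using Nat.le_induction with
  | base =>
    have : (range (2 + 1)).filter Nat.Prime = {2} := by decide
    rw [this]
    have h2 : Real.log 2 ≠ 0 := (Real.log_pos (by norm_num)).ne'
    simp
    field_simp
    linarith
  | succ n hn ih =>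
    have hA := mert_A n (by omega)
    have ha : 0 < Real.log n := Real.log_pos (by exact_mod_cast hn)
    have hab : Real.log n < Real.log ((n+1 : ℕ):ℝ) := by
      apply Real.log_lt_log <;> norm_cast <;> omega
    set a := Real.log n
    set b := Real.log ((n+1 : ℕ):ℝ) with hb
    set A := ∑ p ∈ (range (n + 1)).filter Nat.Prime, Real.log p / p
    have hb0 : 0 < b := ha.trans hab
    have hlog : Real.log a - Real.log b ≤ a / b - 1 := by
      rw [← Real.log_div ha.ne' hb0.ne']
      exact Real.log_le_sub_one_of_pos (by positivity)
    have hmain : A * (1/a - 1/b) ≤ (a + Real.log 4) * (1/a - 1/b) := by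
      apply mul_le_mul_of_nonneg_right hA
      rw [sub_nonneg]
      exact one_div_le_one_div_of_le ha hab.le
    have he : (a + Real.log 4) * (1/a - 1/b) = 1 - a / b + Real.log 4 / a - Real.log 4 / b := by
      field_simp
      ring
    have he2 : A * (1/a - 1/b) = A / a - A / b := by ring
    rw [he, he2] at hmain
    have hkey : A / a + Real.log a - Real.log 4 / a ≤ A / b + Real.log b - Real.log 4 / b := by linarith
    rw [Finset.range_add_one (n := n + 1), Finset.filter_insert]
    split_ifs with hp
    · rw [Finset.sum_insert (by simp), Finset.sum_insert (by simp), ← hb, add_div]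
      have : b / ((n+1:ℕ):ℝ) / b = 1 / ((n+1:ℕ):ℝ) := by field_simp
      rw [this]
      linarith
    · linarith

lemma mertens_upper : ∃ C : ℝ, ∀ n : ℕ, 2 ≤ n →
    ∑ p ∈ (range (n + 1)).filter Nat.Prime, (1:ℝ) / p ≤ Real.log (Real.log n) + C := by
  refine ⟨1 + (Real.log 4 / Real.log 2 - Real.log (Real.log 2)), fun n hn => ?_⟩
  have h1 := mert n hn
  have hA := mert_A n (by omega)
  have ha : 0 < Real.log n := Real.log_pos (by exact_mod_cast hn)
  have : (∑ p ∈ (range (n + 1)).filter Nat.Prime, Real.log p / p) / Real.log n ≤ (Real.log n + Real.log 4) / Real.log n := by gcongr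
  rw [add_div, div_self ha.ne'] at this
  linarith

lemma one_sub_ge_exp (x : ℝ) (h0 : 0 ≤ x) (h1 : x ≤ 1/2) : Real.exp (-(x + 2*x^2)) ≤ 1 - x := by
  have h2 : 0 < 1 - x := by linarith
  have h3 : 1/(1-x) ≤ Real.exp (x + 2*x^2) := by
    have : 1/(1-x) ≤ (x + 2*x^2) + 1 := by
      rw [div_le_iff₀ h2]; nlinarith [mul_nonneg (sq_nonneg x) (sub_nonneg.2 h1)]
    exact this.trans (Real.add_one_le_exp _)
  rw [Real.exp_neg, inv_le_comm₀ (Real.exp_pos _) h2]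
  simpa using h3

lemma prod_lower (K P0 : ℕ) (hP : 2 * K ≤ P0) (b : ℕ → ℝ) (hb : ∀ p, p.Prime → 0 < b p) :
    ∃ c : ℝ, 0 < c ∧ ∀ f : ℕ → ℝ, (∀ p, p.Prime → b p ≤ f p) →
      (∀ p, p.Prime → P0 < p → 1 - (K:ℝ) / p ≤ f p) → ∀ Y : ℝ, 2 ≤ Y →
      c * Real.log Y ^ (-(K:ℝ)) ≤ ∏ p ∈ (range (⌊Y⌋₊ + 1)).filter Nat.Prime, f p := by
  obtain ⟨C, hC⟩ := mertens_upper
  have hsum : Summable (fun n : ℕ => 1 / (n:ℝ)^2) := Real.summable_one_div_nat_pow.mpr (by norm_num)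
  set S := ∑' n : ℕ, 1 / (n:ℝ)^2
  set Bf : ℕ → ℝ := fun p => if p ≤ P0 then |Real.log (b p)| else 0 with hBf
  have hBf0 : ∀ p, 0 ≤ Bf p := fun p => by simp only [hBf]; split_ifs <;> positivity
  set T := ∑ p ∈ range (P0 + 1), Bf p
  refine ⟨Real.exp (-(K * C + 2 * K^2 * S + T)), Real.exp_pos _, fun f hf1 hf2 Y hY => ?_⟩
  set n := ⌊Y⌋₊
  have hn : 2 ≤ n := Nat.le_floor (by exact_mod_cast hY)
  have hnY : (n:ℝ) ≤ Y := Nat.floor_le (by linarith)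
  have hn2 : (2:ℝ) ≤ n := by exact_mod_cast hn
  have hlogn : 0 < Real.log n := Real.log_pos (by linarith)
  have hlogY : 0 < Real.log Y := Real.log_pos (by linarith)
  have hll : Real.log (Real.log n) ≤ Real.log (Real.log Y) :=
    Real.log_le_log hlogn (Real.log_le_log (by linarith) hnY)
  set Q := (range (n + 1)).filter Nat.Prime
  have hpt : ∀ p ∈ Q, Real.exp (-(K * (1/(p:ℝ)) + 2*K^2 * (1/(p:ℝ)^2) + Bf p)) ≤ f p := by
    intro p hp
    have hp' : p.Prime := (Finset.mem_filter.mp hp).2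
    have hpp : (0:ℝ) < p := by exact_mod_cast hp'.pos
    by_cases hpP : p ≤ P0
    · refine le_trans ?_ (hf1 p hp')
      rw [← Real.exp_log (hb p hp')]
      apply Real.exp_le_exp.mpr
      simp only [hBf, if_pos hpP, Real.log_exp]
      have := neg_abs_le (Real.log (b p))
      have : 0 ≤ K * (1/(p:ℝ)) := by positivity
      have : 0 ≤ 2*(K:ℝ)^2 * (1/(p:ℝ)^2) := by positivity
      linarith
    · refine le_trans ?_ (hf2 p hp' (by omega))
      refine le_trans (Real.exp_le_exp.mpr ?_) (one_sub_ge_exp ((K:ℝ)/p) (by positivity) ?_)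
      · simp only [hBf, if_neg hpP]
        apply le_of_eq; ring
      · rw [div_le_iff₀ hpp]
        have : (2 * K : ℝ) ≤ p := by exact_mod_cast (by omega : 2 * K ≤ p)
        linarith
  refine le_trans ?_ (Finset.prod_le_prod (fun p _ => (Real.exp_pos _).le) hpt)
  rw [← Real.exp_sum, Real.rpow_def_of_pos hlogY, ← Real.exp_add]
  apply Real.exp_le_exp.mpr
  rw [Finset.sum_neg_distrib, Finset.sum_add_distrib, Finset.sum_add_distrib, ← Finset.mul_sum, ← Finset.mul_sum]
  have h1 := hC n hn
  have h2 : ∑ p ∈ Q, 1/(p:ℝ)^2 ≤ S := hsum.sum_le_tsum Q (fun _ _ => by positivity)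
  have h3 : ∑ p ∈ Q, Bf p ≤ T := by
    have : ∑ p ∈ Q, Bf p = ∑ p ∈ Q.filter (· ≤ P0), Bf p := by
      rw [Finset.sum_filter (s := Q)]
      apply Finset.sum_congr rfl
      intro p _
      simp only [hBf]; split_ifs <;> rfl
    rw [this]
    apply Finset.sum_le_sum_of_subset_of_nonneg
    · intro p hp
      simp only [Finset.mem_filter] at hp
      exact Finset.mem_range.mpr (by omega)
    · intro i _ _; exact hBf0 i
  have h4 : (K:ℝ) * ∑ p ∈ Q, 1/(p:ℝ) ≤ K * (Real.log (Real.log Y) + C) := by gcongr; linarith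
  have h5 : 2 * (K:ℝ)^2 * ∑ p ∈ Q, 1/(p:ℝ)^2 ≤ 2 * K^2 * S := by gcongr
  linarith

end analytic

section algebraic
open Polynomial

open Classical in
lemma jCount_eq (g : ℤ[X]) (p : ℕ) : jCount g p = ((Finset.range (p ^ gammaExp g p)).filter
    (fun s : ℕ => ((p : ℤ) ^ gammaExp g p) ∣ (derivative g).eval (s : ℤ))).card := by
  unfold jCount
  rw [← Finset.card_map (Nat.castEmbedding : ℕ ↪ ℤ)]
  congr 1
  ext x
  simp only [Finset.bind_def, Finset.pure_def, Finset.mem_filter, Finset.mem_sup, Finset.mem_map, Finset.mem_singleton, Finset.mem_range, Nat.castEmbedding_apply]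
  constructor
  · rintro ⟨⟨s, hs, rfl⟩, h⟩
    exact ⟨s, ⟨hs, h⟩, rfl⟩
  · rintro ⟨s, ⟨hs, h⟩, rfl⟩
    exact ⟨⟨s, hs, rfl⟩, h⟩

lemma factor_lower (g : ℤ[X]) (p c : ℕ) (hp : p.Prime) (hc : 0 < c) (n : ℤ)
    (hn : ¬ (p:ℤ)^c ∣ (derivative g).eval n) :
    1 / (p:ℝ)^c ≤ 1 - (jCount g p : ℝ) / (p:ℝ)^gammaExp g p := by
  classical
  have hmem : c ∈ {c : ℕ | 0 < c ∧ ¬ ∀ n : ℤ, ((p : ℤ) ^ c) ∣ (Polynomial.derivative g).eval n} :=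
    ⟨hc, fun h => hn (h n)⟩
  have hle : gammaExp g p ≤ c := Nat.sInf_le hmem
  obtain ⟨h0, h1⟩ : gammaExp g p ∈ {c : ℕ | 0 < c ∧ ¬ ∀ n : ℤ, ((p : ℤ) ^ c) ∣ (Polynomial.derivative g).eval n} :=
    Nat.sInf_mem ⟨c, hmem⟩
  push Not at h1
  obtain ⟨n0, hn0⟩ := h1
  have hpp : (0:ℝ) < p := by exact_mod_cast hp.pos
  have hp1 : (1:ℝ) ≤ p := by exact_mod_cast hp.one_lt.le
  have hlt : jCount g p + 1 ≤ p ^ gammaExp g p := by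
    rw [jCount_eq]
    set γ := gammaExp g p
    have hpos : (0:ℤ) < (p:ℤ)^γ := by have := hp.pos; positivity
    rw [Nat.add_one_le_iff]
    conv_rhs => rw [← Finset.card_range (p ^ γ)]
    apply Finset.card_lt_card
    rw [Finset.filter_ssubset]
    refine ⟨(n0 % (p:ℤ)^γ).toNat, ?_, ?_⟩
    · rw [Finset.mem_range]
      have h1 := Int.emod_lt_of_pos n0 hpos
      have h2 := Int.emod_nonneg n0 hpos.ne'
      zify
      rw [Int.toNat_of_nonneg h2]
      exact h1
    · rw [Int.toNat_of_nonneg (Int.emod_nonneg n0 hpos.ne')]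
      intro hd
      apply hn0
      have h3 : (p:ℤ)^γ ∣ n0 - n0 % (p:ℤ)^γ := Int.dvd_self_sub_emod
      have h4 := h3.trans (sub_dvd_eval_sub n0 (n0 % (p:ℤ)^γ) (derivative g))
      have := dvd_add h4 hd
      simpa using this
  have hlt' : (jCount g p : ℝ) + 1 ≤ (p:ℝ)^gammaExp g p := by exact_mod_cast hlt
  have hq : (0:ℝ) < (p:ℝ)^gammaExp g p := by positivity
  calc 1 / (p:ℝ)^c ≤ 1 / (p:ℝ)^gammaExp g p := by
        apply one_div_le_one_div_of_le hq
        exact pow_le_pow_right₀ hp1 hle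
    _ ≤ _ := by
        rw [le_sub_iff_add_le, ← add_div, div_le_one hq]
        linarith

open Classical in
lemma factor_lower_big (g : ℤ[X]) (p K : ℕ) (hp : p.Prime) (hK : K < p)
    (hcard : ((Finset.range p).filter (fun s : ℕ => (p:ℤ) ∣ (derivative g).eval (s:ℤ))).card ≤ K) :
    1 - (K:ℝ) / p ≤ 1 - (jCount g p : ℝ) / (p:ℝ)^gammaExp g p := by
  have hγ : gammaExp g p = 1 := by
    have hmem : 1 ∈ {c : ℕ | 0 < c ∧ ¬ ∀ n : ℤ, ((p : ℤ) ^ c) ∣ (Polynomial.derivative g).eval n} := by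
      refine ⟨one_pos, fun h => ?_⟩
      rw [Finset.filter_true_of_mem, Finset.card_range] at hcard
      · omega
      · intro s _; simpa using h s
    have hle : gammaExp g p ≤ 1 := Nat.sInf_le hmem
    have h0 : gammaExp g p ∈ {c : ℕ | 0 < c ∧ ¬ ∀ n : ℤ, ((p : ℤ) ^ c) ∣ (Polynomial.derivative g).eval n} :=
      Nat.sInf_mem ⟨1, hmem⟩
    have := h0.1
    omega
  have hj : jCount g p ≤ K := by
    rw [jCount_eq]
    simp only [hγ, pow_one]
    exact hcard
  have hpp : (0:ℝ) < p := by exact_mod_cast hp.pos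
  rw [hγ, pow_one]
  gcongr

lemma key {p : ℕ} [Fact p.Prime] (h Hd : ℤ[X]) (z : ℤ_[p]) (m0 : ℕ) (g1 : ℤ_[p][X])
    (hg1 : (derivative h).map (algebraMap ℤ ℤ_[p]) = (X - C z)^m0 * g1) (α d' L' : ℕ) (r : ℤ)
    (hH : C ((((p^(m0+1))^α * L' : ℕ)) : ℤ) * Hd = h.comp (C r + C ((p^α * d' : ℕ) : ℤ) * X))
    (hr : (p : ℤ_[p])^α ∣ z - r) :
    ∃ t : ℤ_[p], ∀ n : ℤ, (L' : ℤ_[p]) * (((derivative Hd).eval n : ℤ) : ℤ_[p]) =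
      d' * (t + d' * n)^m0 * g1.eval (z + p^α * (t + d' * n)) := by
  obtain ⟨s, hs⟩ := hr
  refine ⟨-s, fun n => ?_⟩
  have h1 := congrArg (fun P => (derivative P).eval n) hH
  simp only [derivative_mul, derivative_C, zero_mul, zero_add, eval_mul, eval_C, derivative_comp, derivative_add, derivative_X, mul_one, eval_comp, eval_add, eval_X] at h1
  have h2 : (((derivative h).eval (r + ((p^α * d' : ℕ):ℤ) * n) : ℤ) : ℤ_[p]) =
      ((p:ℤ_[p])^α * (-s + d' * n))^m0 * g1.eval (z + p^α * (-s + d' * n)) := by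
    have h3 : z + (p:ℤ_[p])^α * (-s + d' * n) = ((r + ((p^α * d' : ℕ):ℤ) * n : ℤ) : ℤ_[p]) := by
      push_cast
      linear_combination hs
    have h4 := congrArg (fun P => P.eval (z + (p:ℤ_[p])^α * (-s + d' * n))) hg1
    simp only [eval_mul, eval_pow, eval_sub, eval_X, eval_C, add_sub_cancel_left] at h4
    rw [← h4, h3, eval_map_algebraMap]
    rw [aeval_def, eval₂_at_intCast]
    rfl
  have h5 := congrArg (fun P : ℤ => (P : ℤ_[p])) h1
  simp only [Int.cast_mul, h2] at h5
  have hp0 : (p:ℤ_[p]) ≠ 0 := by exact_mod_cast (Fact.out : p.Prime).ne_zero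
  have hp1 : ((p:ℤ_[p])^(m0+1))^α ≠ 0 := pow_ne_zero _ (pow_ne_zero _ hp0)
  apply mul_left_cancel₀ hp1
  push_cast at h5
  rw [← mul_assoc, h5, mul_pow]
  ring

lemma approx {p : ℕ} [Fact p.Prime] (y : ℤ_[p]) (N : ℕ) : ∃ n : ℤ, (p:ℤ_[p])^N ∣ y - n := by
  refine ⟨(y.appr N : ℕ), ?_⟩
  have := PadicInt.appr_spec N y
  rw [Ideal.mem_span_singleton] at this
  simpa using this

lemma nat_unit {p : ℕ} [Fact p.Prime] (d : ℕ) (hd : ¬ p ∣ d) : IsUnit (d : ℤ_[p]) := by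
  rw [PadicInt.isUnit_iff, PadicInt.norm_natCast_eq_one_iff]
  exact ((Nat.Prime.coprime_iff_not_dvd Fact.out).mpr hd)

lemma unit_add {p : ℕ} [Fact p.Prime] (u w : ℤ_[p]) (hu : IsUnit u) (hw : (p:ℤ_[p]) ∣ w) : IsUnit (u + w) := by
  by_contra hc
  rw [PadicInt.not_isUnit_iff, PadicInt.norm_lt_one_iff_dvd] at hc
  have h1 : (p:ℤ_[p]) ∣ u := by simpa using dvd_sub hc hw
  exact PadicInt.prime_p.not_isUnit (isUnit_of_dvd_unit h1 hu)

lemma small_bound {p : ℕ} [Fact p.Prime] (h : ℤ[X]) (z : ℤ_[p]) (m0 : ℕ) (g1 : ℤ_[p][X])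
    (hg1 : (derivative h).map (algebraMap ℤ ℤ_[p]) = (X - C z)^m0 * g1) (hz : g1.eval z ≠ 0) :
    ∃ c : ℕ, 0 < c ∧ ∀ (Hd : ℤ[X]) (α d' L' : ℕ) (r : ℤ), ¬ p ∣ d' →
      C ((((p^(m0+1))^α * L' : ℕ)) : ℤ) * Hd = h.comp (C r + C ((p^α * d' : ℕ) : ℤ) * X) →
      (p : ℤ_[p])^α ∣ z - r → ∃ n : ℤ, ¬ (p:ℤ)^c ∣ (derivative Hd).eval n := by
  set V := (g1.eval z).valuation
  have hV := PadicInt.unitCoeff_spec hz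
  set U := PadicInt.unitCoeff hz
  refine ⟨(V+1) * m0 + V + 1, by omega, fun Hd α d' L' r hd' hH hr => ?_⟩
  obtain ⟨t, ht⟩ := key h Hd z m0 g1 hg1 α d' L' r hH hr
  obtain ⟨D, hD⟩ := nat_unit d' hd'
  obtain ⟨n, w, hn⟩ := approx ((↑D⁻¹ : ℤ_[p]) * ((p:ℤ_[p])^(V+1) - t)) (V+2)
  have htn : t + d' * n = (p:ℤ_[p])^(V+1) * (1 + p * (-(d' * w))) := by
    have hDD : (D:ℤ_[p]) * (↑D⁻¹ : ℤ_[p]) = 1 := by simp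
    rw [← hD]
    have : (n:ℤ_[p]) = (↑D⁻¹ : ℤ_[p]) * ((p:ℤ_[p])^(V+1) - t) - (p:ℤ_[p])^(V+2) * w := by rw [← hn]; ring
    rw [this]
    linear_combination ((p:ℤ_[p])^(V+1) - t) * hDD
  have hu1 : IsUnit (1 + (p:ℤ_[p]) * (-(d' * w))) := unit_add _ _ isUnit_one (dvd_mul_right _ _)
  set u1 := 1 + (p:ℤ_[p]) * (-(d' * w))
  have hg : ∃ u2, IsUnit u2 ∧ g1.eval (z + p^α * (t + d' * n)) = (p:ℤ_[p])^V * u2 := by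
    obtain ⟨x, hx⟩ := sub_dvd_eval_sub (z + p^α * (t + d' * n)) z g1
    refine ⟨U + p * (p^α * u1 * x), unit_add _ _ U.isUnit (dvd_mul_right _ _), ?_⟩
    rw [sub_eq_iff_eq_add] at hx
    rw [hx, hV, htn]
    ring
  obtain ⟨u2, hu2, hgu⟩ := hg
  refine ⟨n, fun hdvd => ?_⟩
  have h1 : (p:ℤ_[p])^((V+1) * m0 + V + 1) ∣ (((derivative Hd).eval n : ℤ) : ℤ_[p]) := by
    rw [PadicInt.pow_p_dvd_int_iff]; exact_mod_cast hdvd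
  have h2 := h1.mul_left (L' : ℤ_[p])
  rw [ht, hgu, htn] at h2
  have h3 : (d':ℤ_[p]) * ((p:ℤ_[p])^(V+1) * u1)^m0 * (p^V * u2) = (p:ℤ_[p])^((V+1) * m0 + V) * (d' * u1^m0 * u2) := by
    ring
  rw [h3, pow_succ] at h2
  have hp0 : (p:ℤ_[p]) ≠ 0 := by exact_mod_cast (Fact.out : p.Prime).ne_zero
  have h4 := (mul_dvd_mul_iff_left (pow_ne_zero _ hp0)).mp h2
  exact PadicInt.prime_p.not_isUnit (isUnit_of_dvd_unit h4 (((nat_unit d' hd').mul (hu1.pow _)).mul hu2))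

open Classical in
lemma big_dvd {p : ℕ} [Fact p.Prime] (h : ℤ[X]) (z : ℤ_[p]) (m0 : ℕ) (g1 : ℤ_[p][X])
    (hg1 : (derivative h).map (algebraMap ℤ ℤ_[p]) = (X - C z)^m0 * g1) (hz : IsUnit (g1.eval z))
    (Hd : ℤ[X]) (α d' L' : ℕ) (r : ℤ) (hd' : ¬ p ∣ d') (hα : 0 < α)
    (hH : C ((((p^(m0+1))^α * L' : ℕ)) : ℤ) * Hd = h.comp (C r + C ((p^α * d' : ℕ) : ℤ) * X))
    (hr : (p : ℤ_[p])^α ∣ z - r) :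
    ((Finset.range p).filter (fun s : ℕ => (p:ℤ) ∣ (derivative Hd).eval (s:ℤ))).card ≤ m0 := by
  obtain ⟨t, ht⟩ := key h Hd z m0 g1 hg1 α d' L' r hH hr
  have hdiv : ∀ n : ℤ, (p:ℤ) ∣ (derivative Hd).eval n → (p:ℤ_[p]) ∣ (t + d' * n)^m0 := by
    intro n hn
    have h1 : (p:ℤ_[p]) ∣ (((derivative Hd).eval n : ℤ) : ℤ_[p]) := by
      have := (PadicInt.pow_p_dvd_int_iff (p := p) 1 ((derivative Hd).eval n)).mpr (by simpa using hn)
      simpa using this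
    have h2 := h1.mul_left (L' : ℤ_[p])
    rw [ht] at h2
    have hu : IsUnit (g1.eval (z + p^α * (t + d' * n))) := by
      have := unit_add _ (g1.eval (z + p^α * (t + d' * n)) - g1.eval z) hz
        ((Dvd.dvd.mul_right (dvd_pow_self _ hα.ne') _).trans
          (by simpa using sub_dvd_eval_sub (z + p^α * (t + d' * n)) z g1))
      simpa using this
    rw [hu.dvd_mul_right, (nat_unit d' hd').dvd_mul_left] at h2
    exact h2
  rcases Nat.eq_zero_or_pos m0 with h0 | h0
  · subst h0
    rw [Nat.le_zero, Finset.card_eq_zero, Finset.filter_eq_empty_iff]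
    intro s _ hs
    have := hdiv s hs
    rw [pow_zero] at this
    exact PadicInt.prime_p.not_isUnit (isUnit_of_dvd_one this)
  · refine le_trans (Finset.card_le_one.mpr ?_) h0
    intro a ha b hb
    rw [Finset.mem_filter, Finset.mem_range] at ha hb
    have h1 := PadicInt.prime_p.dvd_of_dvd_pow (hdiv a ha.2)
    have h2 := PadicInt.prime_p.dvd_of_dvd_pow (hdiv b hb.2)
    have h3 := dvd_sub h1 h2
    have h4 : t + (d':ℤ_[p]) * ((a:ℤ):ℤ_[p]) - (t + (d':ℤ_[p]) * ((b:ℤ):ℤ_[p])) = d' * (((a:ℤ) - (b:ℤ) : ℤ) : ℤ_[p]) := by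
      push_cast; ring
    rw [h4, (nat_unit d' hd').dvd_mul_left] at h3
    have h5 : (p:ℤ) ∣ (a:ℤ) - b := by
      have := (PadicInt.pow_p_dvd_int_iff (p := p) 1 ((a:ℤ) - b)).mp (by simpa using h3)
      simpa using this
    have h6 : (b:ℕ) ≡ a [MOD p] := by rwa [Nat.modEq_iff_dvd]
    have h7 := h6.eq_of_lt_of_lt hb.1 ha.1
    exact h7.symm

open Classical in
lemma big_not_dvd (p k d L : ℕ) (hp : p.Prime) (h Hd : ℤ[X]) (r : ℤ)
    (hd : ¬ p ∣ d) (hdeg : h.natDegree = k) (hk : 0 < k) (hpk : ¬ (p:ℤ) ∣ k * h.leadingCoeff)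
    (hH : C (L : ℤ) * Hd = h.comp (C r + C (d : ℤ) * X)) :
    ((Finset.range p).filter (fun s : ℕ => (p:ℤ) ∣ (derivative Hd).eval (s:ℤ))).card ≤ k - 1 := by
  have : Fact p.Prime := ⟨hp⟩
  set q := (derivative h).map (Int.castRingHom (ZMod p)) with hq
  have hq0 : q ≠ 0 := by
    intro h0
    have h1 : q.coeff (k-1) = 0 := by rw [h0]; simp
    rw [hq, coeff_map, coeff_derivative, Nat.sub_add_cancel hk] at h1
    apply hpk
    rw [← ZMod.intCast_zmod_eq_zero_iff_dvd]
    rw [leadingCoeff, hdeg, mul_comm, ← h1]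
    have : ((k - 1 : ℕ) : ℤ) + 1 = k := by omega
    simp [this]
  have hdegq : q.natDegree ≤ k - 1 := by
    refine natDegree_map_le.trans ((natDegree_derivative_le h).trans (by omega))
  have hd0 : (d : ZMod p) ≠ 0 := by rwa [Ne, ZMod.natCast_eq_zero_iff]
  calc _ ≤ q.roots.toFinset.card := by
        apply Finset.card_le_card_of_injOn (fun s : ℕ => (r : ZMod p) + d * s)
        · intro s hs
          simp only [Finset.coe_filter, Finset.mem_range, Set.mem_setOf_eq] at hs
          have h1 := congrArg (fun P => (derivative P).eval (s:ℤ)) hH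
          simp only [derivative_mul, derivative_C, zero_mul, zero_add, eval_mul, eval_C, derivative_comp, derivative_add, derivative_X, mul_one, eval_comp, eval_add, eval_X] at h1
          have h2 := hs.2.mul_left (L:ℤ)
          rw [h1] at h2
          have h3 : (p:ℤ) ∣ (derivative h).eval (r + d * s) :=
            ((Nat.prime_iff_prime_int.mp hp).dvd_or_dvd h2).resolve_left (by exact_mod_cast hd)
          simp only [Finset.mem_coe, Multiset.mem_toFinset, mem_roots hq0, IsRoot.def]
          rw [← ZMod.intCast_zmod_eq_zero_iff_dvd] at h3
          have h4 := eval_intCast_map (Int.castRingHom (ZMod p)) (derivative h) (r + d * s)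
          rw [← hq] at h4
          push_cast at h4
          rw [h4]
          exact h3
        · intro a ha b hb hab
          simp only [Finset.coe_filter, Finset.mem_range, Set.mem_setOf_eq] at ha hb
          have h1 := mul_left_cancel₀ hd0 (add_left_cancel hab)
          rw [ZMod.natCast_eq_natCast_iff] at h1
          exact h1.eq_of_lt_of_lt ha.1 hb.1
    _ ≤ q.natDegree := (Multiset.toFinset_card_le _).trans (card_roots' q)
    _ ≤ _ := hdegq


lemma den_lemma (P : ℚ[X]) : ∃ N : ℕ, N ≠ 0 ∧ ∀ (p : ℕ) [Fact p.Prime], ¬ p ∣ N → ∀ z : ℤ_[p],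
    ‖(P.map (algebraMap ℚ ℚ_[p])).eval (z : ℚ_[p])‖ ≤ 1 := by
  induction P using Polynomial.induction_on' with
  | add P Q hP hQ =>
    obtain ⟨N1, h1, h1'⟩ := hP
    obtain ⟨N2, h2, h2'⟩ := hQ
    refine ⟨N1 * N2, mul_ne_zero h1 h2, fun p _ hp z => ?_⟩
    rw [Polynomial.map_add, eval_add]
    refine (Padic.nonarchimedean _ _).trans (max_le ?_ ?_)
    · exact h1' p (fun h => hp (h.mul_right _)) z
    · exact h2' p (fun h => hp (h.mul_left _)) z
  | monomial n a =>
    refine ⟨a.den, a.den_ne_zero, fun p _ hp z => ?_⟩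
    rw [map_monomial, eval_monomial, norm_mul, norm_pow]
    have h1 : ‖(a : ℚ_[p])‖ ≤ 1 := Padic.norm_rat_le_one hp
    have h2 : ‖(z : ℚ_[p])‖ ≤ 1 := z.2
    have : algebraMap ℚ ℚ_[p] a = a := rfl
    rw [this]
    exact mul_le_one₀ h1 (by positivity) (pow_le_one₀ (norm_nonneg _) h2)

lemma cofactor_aux {F : Type*} [Field F] (a : F) (A B : F[X]) (e m : ℕ)
    (h : (X - C a)^e * A = (X - C a)^m * B) (hA : A.eval a ≠ 0) (hem : e < m) : False := by
  obtain ⟨c, rfl⟩ := Nat.exists_eq_add_of_lt hem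
  have : (X - C a)^e * A = (X - C a)^e * ((X - C a)^(c+1) * B) := by rw [h]; ring
  have h2 := mul_left_cancel₀ (pow_ne_zero e (X_sub_C_ne_zero a)) this
  apply hA
  rw [h2]; simp

lemma cofactor {F : Type*} [Field F] (a : F) (A B : F[X]) (e m : ℕ)
    (h : (X - C a)^e * A = (X - C a)^m * B) (hA : A.eval a ≠ 0) (hB : B.eval a ≠ 0) :
    A.eval a = B.eval a := by
  rcases lt_trichotomy e m with h1 | h1 | h1
  · exact (cofactor_aux a A B e m h hA h1).elim
  · subst h1
    rw [mul_left_cancel₀ (pow_ne_zero e (X_sub_C_ne_zero a)) h]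
  · exact (cofactor_aux a B A m e h.symm hB h1).elim

def UnitConcl (h : ℤ[X]) (P : ℚ[X]) : Prop :=
  ∃ N : ℕ, N ≠ 0 ∧ ∀ (p : ℕ) [Fact p.Prime], ¬ p ∣ N → ∀ (z : ℤ_[p]) (m : ℕ) (q : ℤ_[p][X]),
    (P.map (algebraMap ℚ ℚ_[p])).eval (z : ℚ_[p]) = 0 →
    h.map (algebraMap ℤ ℤ_[p]) = (X - C z)^m * q → q.eval z ≠ 0 → IsUnit (q.eval z)

lemma unit_irred (h : ℤ[X]) (h0 : h ≠ 0) (f : ℚ[X]) (hf : Irreducible f) :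
    UnitConcl h f := by
  set hQ := h.map (Int.castRingHom ℚ) with hhQ
  have hQ0 : hQ ≠ 0 := by
    rwa [Ne, Polynomial.map_eq_zero_iff (Int.cast_injective)]
  obtain ⟨e, q, hq, hfq⟩ : ∃ e q, hQ = f^e * q ∧ ¬ f ∣ q := by
    obtain ⟨c, hc⟩ := (FiniteMultiplicity.of_not_isUnit hf.not_isUnit hQ0).exists_eq_pow_mul_and_not_dvd
    exact ⟨_, c, hc⟩
  have hsep : IsCoprime f (derivative f) := hf.separable
  have hcop : IsCoprime f (derivative f ^ e * q) :=
    hsep.pow_right.mul_right ((hf.coprime_iff_not_dvd).mpr hfq)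
  obtain ⟨A, B, hAB⟩ := hcop
  obtain ⟨N1, hN1, hN1'⟩ := den_lemma B
  obtain ⟨N2, hN2, hN2'⟩ := den_lemma (derivative f ^ e * q)
  refine ⟨N1 * N2, mul_ne_zero hN1 hN2, fun p _ hp z m Q hfz hh hQz => ?_⟩
  have b1 := hN1' p (fun h => hp (h.mul_right _)) z
  have b2 := hN2' p (fun h => hp (h.mul_left _)) z
  have h1 := congrArg (fun P => (P.map (algebraMap ℚ ℚ_[p])).eval (z : ℚ_[p])) hAB
  simp only [Polynomial.map_add, eval_add, Polynomial.map_one, eval_one] at h1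
  rw [Polynomial.map_mul (p := A), Polynomial.map_mul (p := B), eval_mul (p := A.map _), eval_mul (p := B.map _), hfz, mul_zero, zero_add] at h1
  set W := ((derivative f ^ e * q).map (algebraMap ℚ ℚ_[p])).eval (z : ℚ_[p]) with hW
  have hW1 : ‖W‖ = 1 := by
    have := congrArg norm h1
    rw [norm_mul, norm_one] at this
    nlinarith [norm_nonneg W]
  have hW0 : W ≠ 0 := fun h => by rw [h] at hW1; simp at hW1
  obtain ⟨f1, hf1⟩ := (dvd_iff_isRoot.mpr hfz : X - C (z:ℚ_[p]) ∣ f.map (algebraMap ℚ ℚ_[p]))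
  have hf1z : f1.eval (z:ℚ_[p]) = ((derivative f).map (algebraMap ℚ ℚ_[p])).eval (z:ℚ_[p]) := by
    rw [← derivative_map, hf1]; simp
  have hmap : (h.map (algebraMap ℤ ℤ_[p])).map (algebraMap ℤ_[p] ℚ_[p]) = hQ.map (algebraMap ℚ ℚ_[p]) := by
    rw [hhQ, Polynomial.map_map, Polynomial.map_map]
    congr 1
  have heq : (X - C (z:ℚ_[p]))^e * (f1^e * q.map (algebraMap ℚ ℚ_[p])) =
      (X - C (z:ℚ_[p]))^m * Q.map (algebraMap ℤ_[p] ℚ_[p]) := by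
    rw [hq, hh] at hmap
    simp only [Polynomial.map_mul, Polynomial.map_pow, Polynomial.map_sub, map_X, map_C, hf1] at hmap
    rw [← mul_assoc, ← mul_pow, ← hmap]
    rfl
  have hev : (Q.map (algebraMap ℤ_[p] ℚ_[p])).eval (z:ℚ_[p]) = ((Q.eval z : ℤ_[p]) : ℚ_[p]) := by
    have := eval_map_apply (algebraMap ℤ_[p] ℚ_[p]) (p := Q) z
    exact this
  have hWe : (f1^e * q.map (algebraMap ℚ ℚ_[p])).eval (z:ℚ_[p]) = W := by
    rw [hW, eval_mul, eval_pow, hf1z]; simp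
  have := cofactor _ _ _ _ _ heq (by rwa [hWe]) (by rw [hev]; exact PadicInt.coe_ne_zero.mpr hQz)
  rw [hWe, hev] at this
  rw [PadicInt.isUnit_iff, PadicInt.norm_def, ← this, hW1]

lemma unit_all (h : ℤ[X]) (h0 : h ≠ 0) (P : ℚ[X]) (hP : P ≠ 0) : UnitConcl h P := by
  induction P using WfDvdMonoid.induction_on_irreducible with
  | zero => exact absurd rfl hP
  | unit u hu =>
    refine ⟨1, one_ne_zero, fun p _ _ z m q hz => ?_⟩
    have := (hu.map (mapRingHom (algebraMap ℚ ℚ_[p]))).map (evalRingHom (z:ℚ_[p]))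
    simp only [coe_mapRingHom, coe_evalRingHom, hz] at this
    exact absurd this not_isUnit_zero
  | mul a i ha hi ih =>
    obtain ⟨N1, hN1, hN1'⟩ := ih ha
    obtain ⟨N2, hN2, hN2'⟩ := unit_irred h h0 i hi
    refine ⟨N1 * N2, mul_ne_zero hN1 hN2, fun p _ hp z m Q hz => ?_⟩
    rw [Polynomial.map_mul, eval_mul, mul_eq_zero] at hz
    rcases hz with hz | hz
    · exact hN2' p (fun h => hp (h.mul_left _)) z m Q hz
    · exact hN1' p (fun h => hp (h.mul_right _)) z m Q hz

lemma unit_lemma (h : ℤ[X]) (h0 : h ≠ 0) : ∃ N : ℕ, N ≠ 0 ∧ ∀ (p : ℕ) [Fact p.Prime], ¬ p ∣ N →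
    ∀ (z : ℤ_[p]) (m : ℕ) (q : ℤ_[p][X]), aeval z h = 0 →
    h.map (algebraMap ℤ ℤ_[p]) = (X - C z)^m * q → q.eval z ≠ 0 → IsUnit (q.eval z) := by
  obtain ⟨N, hN, hN'⟩ := unit_all h h0 (h.map (Int.castRingHom ℚ))
    (by rwa [Ne, Polynomial.map_eq_zero_iff (Int.cast_injective)])
  refine ⟨N, hN, fun p _ hp z m q hz => hN' p hp z m q ?_⟩
  have h1 : (h.map (Int.castRingHom ℚ)).map (algebraMap ℚ ℚ_[p]) = (h.map (algebraMap ℤ ℤ_[p])).map (algebraMap ℤ_[p] ℚ_[p]) := by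
    rw [Polynomial.map_map, Polynomial.map_map]
    congr 1
  rw [h1]
  have := eval_map_apply (algebraMap ℤ_[p] ℚ_[p]) (p := h.map (algebraMap ℤ ℤ_[p])) z
  have h2 : (h.map (algebraMap ℤ ℤ_[p])).eval z = 0 := by rw [eval_map_algebraMap, hz]
  rw [h2, map_zero] at this
  exact this

lemma factor_deriv {p : ℕ} [Fact p.Prime] (h : ℤ[X]) (h0 : h ≠ 0) (z : ℤ_[p]) (hz : aeval z h = 0) :
    ∃ (m0 : ℕ) (q g1 : ℤ_[p][X]), rootMultiplicity z (h.map (algebraMap ℤ ℤ_[p])) = m0 + 1 ∧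
      m0 + 1 ≤ h.natDegree ∧
      h.map (algebraMap ℤ ℤ_[p]) = (X - C z)^(m0+1) * q ∧ q.eval z ≠ 0 ∧
      (derivative h).map (algebraMap ℤ ℤ_[p]) = (X - C z)^m0 * g1 ∧
      g1.eval z = ((m0 + 1 : ℕ) : ℤ_[p]) * q.eval z := by
  set P := h.map (algebraMap ℤ ℤ_[p]) with hPdef
  have hP : P ≠ 0 := by
    rwa [Ne, hPdef, Polynomial.map_eq_zero_iff (by exact Int.cast_injective)]
  have hroot : P.IsRoot z := by
    rw [IsRoot.def, hPdef, eval_map_algebraMap, hz]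
  have hpos := (rootMultiplicity_pos hP).mpr hroot
  obtain ⟨m0, hm0⟩ := Nat.exists_eq_add_of_lt hpos
  rw [zero_add] at hm0
  obtain ⟨q, hq, hnd⟩ := exists_eq_pow_rootMultiplicity_mul_and_not_dvd P hP z
  rw [hm0] at hq
  refine ⟨m0, q, C ((m0 + 1 : ℕ) : ℤ_[p]) * q + (X - C z) * derivative q, hm0, ?_, hq, ?_, ?_, ?_⟩
  · classical
    rw [← hm0]
    exact ((count_roots P (a := z)).symm.le.trans ((Multiset.count_le_card _ _).trans (card_roots' P))).trans natDegree_map_le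
  · rwa [dvd_iff_isRoot] at hnd
  · rw [← derivative_map, ← hPdef, hq, derivative_mul, derivative_X_sub_C_pow]
    simp only [Nat.add_sub_cancel, map_natCast]
    ring
  · simp

end algebraic

lemma lam_pow (lam : ℕ → ℕ) (hlam1 : lam 1 = 1) (hlamMul : ∀ a b : ℕ, lam (a * b) = lam a * lam b)
    (p α : ℕ) : lam (p^α) = lam p ^ α := by
  induction α with
  | zero => simpa using hlam1
  | succ n ih => rw [pow_succ, hlamMul, ih, pow_succ]

/-- Proposition 3.5: `w_d(Y) ≫_h (log Y)^{1-k}`. -/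
theorem stmt7
    (k : ℕ) (hk : 0 < k)
    (h : Polynomial ℤ) (hdeg : h.natDegree = k) (hlead : 0 < h.leadingCoeff)
    (hint : ∀ q : ℕ, 0 < q → ∃ n : ℤ, (q : ℤ) ∣ h.eval n)
    (z : ∀ (p : ℕ) [Fact p.Prime], ℤ_[p])
    (hz : ∀ (p : ℕ) [Fact p.Prime], Polynomial.aeval (z p) h = 0)
    (lam : ℕ → ℕ) (hlam1 : lam 1 = 1)
    (hlamMul : ∀ a b : ℕ, lam (a * b) = lam a * lam b)
    (hlamP : ∀ (p : ℕ) [Fact p.Prime],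
      lam p = p ^ Polynomial.rootMultiplicity (z p) (h.map (algebraMap ℤ ℤ_[p])))
    (r : ℕ → ℤ)
    (hr : ∀ d : ℕ, 0 < d → -(d : ℤ) < r d ∧ r d ≤ 0)
    (hrz : ∀ d : ℕ, 0 < d → ∀ (p : ℕ) [Fact p.Prime], ∀ α : ℕ, p ^ α ∣ d →
      (p : ℤ_[p]) ^ α ∣ (z p - (r d : ℤ_[p])))
    (H : ℕ → Polynomial ℤ)
    (hH : ∀ d : ℕ, 0 < d →
      Polynomial.C (lam d : ℤ) * H d =
        h.comp (Polynomial.C (r d) + Polynomial.C (d : ℤ) * Polynomial.X))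
    :
    ∃ c : ℝ, 0 < c ∧ ∀ d : ℕ, 0 < d → ∀ Y : ℝ, 2 ≤ Y →
      c * Real.log Y ^ ((1 : ℝ) - (k : ℝ)) ≤ wProd (H d) Y := by
  classical
  have hh0 : h ≠ 0 := by
    rintro rfl
    simp at hlead
  have hfac : ∀ (p : ℕ) [Fact p.Prime] (m0 : ℕ),
      Polynomial.rootMultiplicity (z p) (h.map (algebraMap ℤ ℤ_[p])) = m0 + 1 → ∀ d : ℕ, 0 < d →
      ∃ α d' L' : ℕ, ¬ p ∣ d' ∧ d = p^α * d' ∧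
        Polynomial.C ((((p^(m0+1))^α * L' : ℕ)) : ℤ) * H d =
          h.comp (Polynomial.C (r d) + Polynomial.C ((p^α * d' : ℕ) : ℤ) * Polynomial.X) ∧
        (p : ℤ_[p])^α ∣ z p - r d := by
    intro p hp m0 hm d hd
    obtain ⟨α, d', hd', hdd⟩ := Nat.exists_eq_pow_mul_and_not_dvd hd.ne' p hp.out.ne_one
    refine ⟨α, d', lam d', hd', hdd, ?_, hrz d hd p α ⟨d', hdd⟩⟩
    have h1 := hH d hd
    have h2 : lam d = (p^(m0+1))^α * lam d' := by
      rw [hdd, hlamMul, lam_pow lam hlam1 hlamMul, hlamP p, hm]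
    rw [← h2, ← hdd]
    exact h1
  have hsmall : ∀ p : ℕ, ∃ b : ℝ, p.Prime → 0 < b ∧ ∀ d : ℕ, 0 < d →
      b ≤ 1 - (jCount (H d) p : ℝ) / (p:ℝ)^gammaExp (H d) p := by
    intro p
    by_cases hp : p.Prime
    · have : Fact p.Prime := ⟨hp⟩
      obtain ⟨m0, q, g1, hm, -, -, hqz, hg1, hg1z⟩ := factor_deriv h hh0 (z p) (hz p)
      have hne : g1.eval (z p) ≠ 0 := by
        rw [hg1z]
        exact mul_ne_zero (by exact_mod_cast Nat.succ_ne_zero m0) hqz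
      obtain ⟨c, hc, hcc⟩ := small_bound h (z p) m0 g1 hg1 hne
      refine ⟨1 / (p:ℝ)^c, fun _ => ⟨?_, fun d hd => ?_⟩⟩
      · have := hp.pos
        positivity
      · obtain ⟨α, d', L', hd', -, hH', hr'⟩ := hfac p m0 hm d hd
        obtain ⟨n, hn⟩ := hcc (H d) α d' L' (r d) hd' hH' hr'
        exact factor_lower (H d) p c hp hc n hn
    · exact ⟨1, fun h => absurd h hp⟩
  choose b hb using hsmall
  obtain ⟨N, hN0, hN⟩ := unit_lemma h hh0
  set M : ℕ := k * h.leadingCoeff.natAbs with hM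
  have hM0 : 0 < M := Nat.mul_pos hk (Int.natAbs_pos.mpr hlead.ne')
  obtain ⟨c, hc0, hc⟩ := prod_lower (k - 1) (2 * k + N + M) (by omega) b (fun p hp => (hb p hp).1)
  refine ⟨c, hc0, fun d hd Y hY => ?_⟩
  have hbig : ∀ p : ℕ, p.Prime → 2 * k + N + M < p →
      1 - ((k - 1 : ℕ) : ℝ) / p ≤ 1 - (jCount (H d) p : ℝ) / (p:ℝ)^gammaExp (H d) p := by
    intro p hp hpP
    have : Fact p.Prime := ⟨hp⟩
    apply factor_lower_big (H d) p (k - 1) hp (by omega)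
    by_cases hpd : p ∣ d
    · obtain ⟨m0, q, g1, hm, hmk, hq, hqz, hg1, hg1z⟩ := factor_deriv h hh0 (z p) (hz p)
      obtain ⟨α, d', L', hd', hdd, hH', hr'⟩ := hfac p m0 hm d hd
      have hα : 0 < α := by
        rcases Nat.eq_zero_or_pos α with h0 | h0
        · rw [h0, pow_zero, one_mul] at hdd
          exact absurd (hdd ▸ hpd) hd'
        · exact h0
      have hpN : ¬ p ∣ N := fun hdv => by
        have := Nat.le_of_dvd (Nat.pos_of_ne_zero hN0) hdv
        omega
      have hu := hN p hpN (z p) (m0 + 1) q (hz p) hq hqz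
      have hu2 : IsUnit (((m0 + 1 : ℕ)) : ℤ_[p]) := nat_unit _ (fun hdv => by
        have := Nat.le_of_dvd (Nat.succ_pos m0) hdv
        omega)
      have := big_dvd h (z p) m0 g1 hg1 (by rw [hg1z]; exact hu2.mul hu) (H d) α d' L' (r d) hd' hα hH' hr'
      omega
    · refine big_not_dvd p k d (lam d) hp h (H d) (r d) hpd hdeg hk ?_ (hH d hd)
      intro hdv
      have h1 := Int.natAbs_dvd_natAbs.mpr hdv
      rw [Int.natAbs_mul, Int.natAbs_natCast, Int.natAbs_natCast] at h1
      have := Nat.le_of_dvd hM0 h1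
      omega
  have := hc (fun p => 1 - (jCount (H d) p : ℝ) / (p:ℝ)^gammaExp (H d) p)
    (fun p hp => (hb p hp).2 d hd) hbig Y hY
  have he : (1:ℝ) - k = -((k - 1 : ℕ) : ℝ) := by
    rw [Nat.cast_sub (by omega)]; simp
  rw [he]
  unfold wProd
  convert this
end
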